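/- Let n ≥ 1. There exist constants ε₀ > 0 and C > 0, depending only on n, with the following property: if K is a smooth, strictly convex body in ℝ^{n+1} with positive support function h containing the origin in its interior, and 1 − ε ≤ h(x)·det(A(x)+x⊗x) ≤ 1 + ε for all x ∈ S^n for some ε ∈ (0, ε₀) (i.e. 1−ε ≤ h/𝒦 ≤ 1+ε), then h(x) ≤ C for all x ∈ S^n. -/

import Mathlib

open MeasureTheory Metric Real
open scoped InnerProductSpace ENNReal Topology

noncomputable section

/-- Euclidean space `ℝ^{n+1}`. -/
abbrev Eu (n : ℕ) : Type := EuclideanSpace ℝ (Fin (n + 1))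

/-- The unit sphere `S^n ⊆ ℝ^{n+1}` as a subtype. -/
abbrev Sph (n : ℕ) : Type := Metric.sphere (0 : Eu n) 1

/-- The spherical Lebesgue (surface) measure on `S^n`. -/
def sphMeas (n : ℕ) : Measure (Sph n) := (volume : Measure (Eu n)).toSphere

/-- The support function of a set `K ⊆ ℝ^{n+1}`. -/
def sfn {n : ℕ} (K : Set (Eu n)) (z : Eu n) : ℝ :=
  sSup ((fun y => ⟪z, y⟫_ℝ) '' K)

/-- The Hessian endomorphism `A(x) = D(∇ h_K)(x)`. -/
def hessA {n : ℕ} (K : Set (Eu n)) (x : Eu n) : Eu n →L[ℝ] Eu n :=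
  fderiv ℝ (gradient (sfn K)) x

/-- The rank-one endomorphism `x ⊗ x : v ↦ ⟨v, x⟩ x`. -/
def tens {n : ℕ} (x : Eu n) : Eu n →L[ℝ] Eu n :=
  (innerSL ℝ x).smulRight x

/-- `det (A(x) + x ⊗ x)`, the reciprocal Gauss curvature `1/𝒦` at `x ∈ S^n`. -/
def rK {n : ℕ} (K : Set (Eu n)) (x : Eu n) : ℝ :=
  LinearMap.det ((hessA K x + tens x : Eu n →L[ℝ] Eu n) : Eu n →ₗ[ℝ] Eu n)

/-- `K` is a smooth, strictly convex body with positive support function. -/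
structure IsSmoothConvexBody {n : ℕ} (K : Set (Eu n)) : Prop where
  compact : IsCompact K
  convex : Convex ℝ K
  interior_nonempty : (interior K).Nonempty
  pos : ∀ x : Sph n, 0 < sfn K x
  smooth : ContDiffOn ℝ (⊤ : ℕ∞) (sfn K) {(0 : Eu n)}ᶜ
  posdef : ∀ x : Sph n, ∀ v : Eu n, v ≠ 0 →
    0 < ⟪(hessA K (x : Eu n) + tens (x : Eu n)) v, v⟫_ℝ

/-- The density `h·det(A + x⊗x)` of the measure `dV` with respect to `dθ`. -/
def dens {n : ℕ} (K : Set (Eu n)) (x : Eu n) : ℝ := sfn K x * rK K x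

/-- The centroid-type point `c(K) = (∫ ∇h_K dV)/(∫ dV)`. -/
def cK {n : ℕ} (K : Set (Eu n)) : Eu n :=
  (∫ x : Sph n, dens K x ∂sphMeas n)⁻¹ •
    ∫ x : Sph n, dens K x • gradient (sfn K) x ∂sphMeas n

/-- The support function of the translated body `K - c(K)`. -/
def tsfn {n : ℕ} (K : Set (Eu n)) (x : Eu n) : ℝ := sfn K x - ⟪x, cK K⟫_ℝ


section Aux
open scoped Pointwise


/-! ### Prekopa-Leindler -/

theorem bm1_compact {A B : Set ℝ} (hA : IsCompact A) (hB : IsCompact B)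
    (hA0 : A.Nonempty) (hB0 : B.Nonempty) {C : Set ℝ}
    (hC : ∀ a ∈ A, ∀ b ∈ B, a + b ∈ C) :
    volume A + volume B ≤ volume C := by
  obtain ⟨a, ha, hamax⟩ := hA.exists_isMaxOn hA0 continuousOn_id
  obtain ⟨b, hb, hbmin⟩ := hB.exists_isMinOn hB0 continuousOn_id
  have h1 : volume ((fun x => b + x) '' A) = volume A := by
    rw [Set.image_add_left]; simp
  have h2 : volume ((fun x => a + x) '' B) = volume B := by
    rw [Set.image_add_left]; simp
  have hm : MeasurableSet ((fun x => a + x) '' B) :=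
    (hB.image (continuous_const.add continuous_id)).measurableSet
  have hd : AEDisjoint volume ((fun x => b + x) '' A) ((fun x => a + x) '' B) := by
    refine measure_mono_null (t := {a + b}) ?_ (by simp)
    rintro z ⟨⟨x, hx, rfl⟩, ⟨y, hy, hxy⟩⟩
    have e1 : x ≤ a := hamax hx
    have e2 : b ≤ y := hbmin hy
    simp only [Set.mem_singleton_iff] at *
    linarith
  rw [← h1, ← h2, ← measure_union₀ hm.nullMeasurableSet hd]
  refine measure_mono ?_
  rintro z (⟨x, hx, rfl⟩ | ⟨y, hy, rfl⟩)
  · have := hC x hx b hb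
    rwa [add_comm] at this
  · exact hC a ha y hy

theorem bm1 {A B : Set ℝ} (hA : MeasurableSet A) (hB : MeasurableSet B)
    (hA0 : A.Nonempty) (hB0 : B.Nonempty) {C : Set ℝ}
    (hC : ∀ a ∈ A, ∀ b ∈ B, a + b ∈ C) :
    volume A + volume B ≤ volume C := by
  obtain ⟨a0, ha0⟩ := hA0
  obtain ⟨b0, hb0⟩ := hB0
  have key : ∀ K₁ ⊆ A, IsCompact K₁ → ∀ K₂ ⊆ B, IsCompact K₂ →
      volume K₁ + volume K₂ ≤ volume C := by
    intro K₁ h1 c1 K₂ h2 c2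
    calc volume K₁ + volume K₂ ≤ volume (insert a0 K₁) + volume (insert b0 K₂) := by
          gcongr <;> simp
      _ ≤ volume C := by
          refine bm1_compact (c1.insert a0) (c2.insert b0) (by simp) (by simp) ?_
          intro a ha b hb
          refine hC a ?_ b ?_
          · rcases ha with rfl | ha; exacts [ha0, h1 ha]
          · rcases hb with rfl | hb; exacts [hb0, h2 hb]
  rw [hA.measure_eq_iSup_isCompact, hB.measure_eq_iSup_isCompact]
  simp only [ENNReal.iSup_add, ENNReal.add_iSup, iSup_le_iff, iSup_and']
  intro K₂ K₁
  by_cases c1 : K₁ ⊆ A ∧ IsCompact K₁ <;> by_cases c2 : K₂ ⊆ B ∧ IsCompact K₂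
  · simpa [c1, c2] using key K₁ c1.1 c1.2 K₂ c2.1 c2.2
  · simpa [c1, c2] using key K₁ c1.1 c1.2 ∅ (by simp) (by simp)
  · simpa [c1, c2] using key ∅ (by simp) (by simp) K₂ c2.1 c2.2
  · simp [c1, c2]

theorem amgm_ennreal {l : ℝ} (hl0 : 0 < l) (hl1 : l < 1) (a b : ℝ≥0∞) :
    a ^ (1 - l) * b ^ l ≤ ENNReal.ofReal (1 - l) * a + ENNReal.ofReal l * b := by
  have hc : ((1 - l)⁻¹).HolderConjugate (l⁻¹) := by
    constructor
    · simp
    · exact inv_pos.2 (by linarith)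
    · exact inv_pos.2 hl0
  have h := ENNReal.young_inequality (a ^ (1 - l)) (b ^ l) hc
  have h1 : (1 - l) ≠ 0 := by linarith
  rw [← ENNReal.rpow_mul, ← ENNReal.rpow_mul, mul_inv_cancel₀ h1, mul_inv_cancel₀ hl0.ne',
    ENNReal.rpow_one, ENNReal.rpow_one, ENNReal.ofReal_inv_of_pos (by linarith),
    ENNReal.ofReal_inv_of_pos hl0, div_eq_mul_inv, div_eq_mul_inv, inv_inv, inv_inv] at h
  rw [mul_comm _ a, mul_comm _ b]
  exact h

theorem pl1_norm {l : ℝ} (hl0 : 0 < l) (hl1 : l < 1) {f g h : ℝ → ℝ}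
    (hf : Measurable f) (hg : Measurable g) (hh : Measurable h)
    (f0 : ∀ x, 0 ≤ f x) (f1 : ∀ x, f x ≤ 1) (g0 : ∀ x, 0 ≤ g x) (g1 : ∀ x, g x ≤ 1)
    (h0 : ∀ x, 0 ≤ h x)
    (fs : ∀ t < 1, ∃ x, t < f x) (gs : ∀ t < 1, ∃ x, t < g x)
    (H : ∀ t : ℝ, 0 < t → t < 1 → ∀ x y, t < f x → t < g y → t < h ((1 - l) * x + l * y)) :
    ENNReal.ofReal (1 - l) * (∫⁻ x, ENNReal.ofReal (f x)) +
      ENNReal.ofReal l * (∫⁻ x, ENNReal.ofReal (g x)) ≤ ∫⁻ x, ENNReal.ofReal (h x) := by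
  rw [lintegral_eq_lintegral_meas_lt _ (.of_forall f0) hf.aemeasurable,
    lintegral_eq_lintegral_meas_lt _ (.of_forall g0) hg.aemeasurable,
    lintegral_eq_lintegral_meas_lt _ (.of_forall h0) hh.aemeasurable]
  have mf : Measurable fun t => volume {a | t < f a} :=
    Antitone.measurable fun s t hst => measure_mono fun a ha => lt_of_le_of_lt hst ha
  have mg : Measurable fun t => volume {a | t < g a} :=
    Antitone.measurable fun s t hst => measure_mono fun a ha => lt_of_le_of_lt hst ha
  rw [← lintegral_const_mul _ mf, ← lintegral_const_mul _ mg,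
    ← lintegral_add_left (mf.const_mul _)]
  refine setLIntegral_mono' measurableSet_Ioi ?_
  intro t ht
  have ht : 0 < t := ht
  by_cases ht1 : t < 1
  · have e1 : ENNReal.ofReal (1 - l) * volume {a | t < f a}
        = volume ((1 - l) • {a | t < f a}) := by
      rw [Measure.addHaar_smul]; simp [abs_of_pos (sub_pos.2 hl1)]
    have e2 : ENNReal.ofReal l * volume {a | t < g a}
        = volume (l • {a | t < g a}) := by
      rw [Measure.addHaar_smul]; simp [abs_of_pos hl0]
    rw [e1, e2]
    refine bm1 ?_ ?_ ?_ ?_ ?_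
    · exact (measurableSet_lt measurable_const hf).const_smul_of_ne_zero (by linarith)
    · exact (measurableSet_lt measurable_const hg).const_smul_of_ne_zero (by linarith)
    · exact Set.Nonempty.smul_set (fs t ht1)
    · exact Set.Nonempty.smul_set (gs t ht1)
    · rintro _ ⟨x, hx, rfl⟩ _ ⟨y, hy, rfl⟩
      exact H t ht ht1 x y hx hy
  · have e1 : {a | t < f a} = ∅ := by
      ext x; simp; linarith [f1 x]
    have e2 : {a | t < g a} = ∅ := by
      ext x; simp; linarith [g1 x]
    simp [e1, e2]

/-- one-dimensional Prekopa-Leindler, bounded case -/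
theorem pl1_bdd {l : ℝ} (hl0 : 0 < l) (hl1 : l < 1) {f g h : ℝ → ℝ≥0∞}
    (hf : Measurable f) (hg : Measurable g) (hh : Measurable h)
    {N : ℝ≥0∞} (hN : N ≠ ∞) (fN : ∀ x, f x ≤ N) (gN : ∀ x, g x ≤ N)
    (H : ∀ x y, f x ^ (1 - l) * g y ^ l ≤ h ((1 - l) * x + l * y)) :
    (∫⁻ x, f x) ^ (1 - l) * (∫⁻ x, g x) ^ l ≤ ∫⁻ x, h x := by
  have hl1' : 0 < 1 - l := by linarith
  set M := ⨆ x, f x with hM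
  set P := ⨆ x, g x with hP
  have hMt : M ≠ ∞ := ne_top_of_le_ne_top hN (iSup_le fN)
  have hPt : P ≠ ∞ := ne_top_of_le_ne_top hN (iSup_le gN)
  by_cases hM0 : M = 0
  · have : ∀ x, f x = 0 := fun x => le_antisymm (by rw [← hM0]; exact le_iSup f x) bot_le
    simp [this, hl1', ENNReal.zero_rpow_of_pos]
  by_cases hP0 : P = 0
  · have : ∀ x, g x = 0 := fun x => le_antisymm (by rw [← hP0]; exact le_iSup g x) bot_le
    simp [this, hl0, ENNReal.zero_rpow_of_pos]
  set D := M ^ (1 - l) * P ^ l with hD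
  have hD0 : D ≠ 0 := by
    simp [hD, hM0, hP0, hMt, hPt, ENNReal.rpow_eq_zero_iff]
  have hDt : D ≠ ∞ := by
    refine ENNReal.mul_ne_top ?_ ?_
    · exact ENNReal.rpow_ne_top_of_nonneg hl1'.le hMt
    · exact ENNReal.rpow_ne_top_of_nonneg hl0.le hPt
  have fle : ∀ x, f x / M ≤ 1 := fun x => ENNReal.div_le_of_le_mul (by simpa using le_iSup f x)
  have gle : ∀ x, g x / P ≤ 1 := fun x => ENNReal.div_le_of_le_mul (by simpa using le_iSup g x)
  have sup_aux : ∀ (u : ℝ → ℝ≥0∞) (Q : ℝ≥0∞), (⨆ x, u x) = Q → Q ≠ 0 → Q ≠ ∞ →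
      (∀ x, u x / Q ≤ 1) → ∀ t : ℝ, t < 1 → ∃ x, t < (u x / Q).toReal := by
    intro u Q hQ hQ0 hQt ule t ht
    have : ENNReal.ofReal t * Q < Q := by
      calc ENNReal.ofReal t * Q < 1 * Q := by
            refine ENNReal.mul_lt_mul_left hQ0 hQt ?_
            simpa using ht
        _ = Q := one_mul _
    conv_rhs at this => rw [← hQ]
    obtain ⟨x, hx⟩ := lt_iSup_iff.1 this
    refine ⟨x, ?_⟩
    have h2 : ENNReal.ofReal t < u x / Q := by
      rw [ENNReal.lt_div_iff_mul_lt (Or.inl hQ0) (Or.inl hQt)]; exact hx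
    by_contra hcon
    have h3 := ENNReal.ofReal_le_ofReal (not_lt.1 hcon)
    rw [ENNReal.ofReal_toReal (ne_top_of_le_ne_top ENNReal.one_ne_top (ule x))] at h3
    exact absurd h2 (not_lt.2 h3)
  have main := pl1_norm hl0 hl1 (f := fun x => (f x / M).toReal) (g := fun x => (g x / P).toReal)
    (h := fun x => (min (h x / D) 1).toReal)
    (hf.div_const _).ennreal_toReal (hg.div_const _).ennreal_toReal
    ((hh.div_const _).min measurable_const).ennreal_toReal
    (fun x => ENNReal.toReal_nonneg)
    (fun x => by simpa using ENNReal.toReal_mono ENNReal.one_ne_top (fle x))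
    (fun x => ENNReal.toReal_nonneg)
    (fun x => by simpa using ENNReal.toReal_mono ENNReal.one_ne_top (gle x))
    (fun x => ENNReal.toReal_nonneg)
    (sup_aux f M hM.symm hM0 hMt fle) (sup_aux g P hP.symm hP0 hPt gle)
    (by
      intro t ht0 ht1 x y hx hy
      have hfx : f x / M ≠ ∞ := ne_top_of_le_ne_top ENNReal.one_ne_top (fle x)
      have hgy : g y / P ≠ ∞ := ne_top_of_le_ne_top ENNReal.one_ne_top (gle y)
      have h1 : ENNReal.ofReal t < f x / M := (ENNReal.ofReal_lt_iff_lt_toReal ht0.le hfx).2 hx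
      have h2 : ENNReal.ofReal t < g y / P := (ENNReal.ofReal_lt_iff_lt_toReal ht0.le hgy).2 hy
      refine (ENNReal.ofReal_lt_iff_lt_toReal ht0.le (by simp)).1 ?_
      refine lt_min ?_ (by simpa using ht1)
      calc ENNReal.ofReal t = ENNReal.ofReal t ^ (1 - l) * ENNReal.ofReal t ^ l := by
            rw [← ENNReal.rpow_add_of_nonneg _ _ hl1'.le hl0.le]; simp
        _ < (f x / M) ^ (1 - l) * (g y / P) ^ l := by
            refine ENNReal.mul_lt_mul ?_ ?_
            · exact ENNReal.rpow_lt_rpow h1 hl1'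
            · exact ENNReal.rpow_lt_rpow h2 hl0
        _ = f x ^ (1 - l) * g y ^ l / D := by
            rw [ENNReal.div_rpow_of_nonneg _ _ hl1'.le, ENNReal.div_rpow_of_nonneg _ _ hl0.le, hD,
              div_eq_mul_inv, div_eq_mul_inv, div_eq_mul_inv, ENNReal.mul_inv]
            · ring
            · right; exact ENNReal.rpow_ne_top_of_nonneg hl0.le hPt
            · left; exact ENNReal.rpow_ne_top_of_nonneg hl1'.le hMt
        _ ≤ h ((1 - l) * x + l * y) / D := ENNReal.div_le_div_right (H x y) _)
  have r1 : ∀ x, ENNReal.ofReal ((f x / M).toReal) = f x * M⁻¹ := fun x =>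
    ENNReal.ofReal_toReal (ne_top_of_le_ne_top ENNReal.one_ne_top (fle x))
  have r2 : ∀ x, ENNReal.ofReal ((g x / P).toReal) = g x * P⁻¹ := fun x =>
    ENNReal.ofReal_toReal (ne_top_of_le_ne_top ENNReal.one_ne_top (gle x))
  have r3 : ∀ x, ENNReal.ofReal ((min (h x / D) 1).toReal) ≤ h x * D⁻¹ := fun x =>
    ENNReal.ofReal_toReal_le.trans (min_le_left _ _)
  simp only [r1, r2] at main
  have main2 := (amgm_ennreal hl0 hl1 _ _).trans (main.trans (lintegral_mono r3))
  rw [lintegral_mul_const _ hf, lintegral_mul_const _ hg, lintegral_mul_const _ hh,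
    ENNReal.mul_rpow_of_nonneg _ _ hl1'.le, ENNReal.mul_rpow_of_nonneg _ _ hl0.le,
    ENNReal.inv_rpow, ENNReal.inv_rpow, mul_mul_mul_comm, ← ENNReal.mul_inv, ← hD] at main2
  · have := mul_le_mul_left main2 D
    rwa [mul_assoc, mul_assoc _ D⁻¹ D, ENNReal.inv_mul_cancel hD0 hDt, mul_one,
      mul_one] at this
  · right; exact ENNReal.rpow_ne_top_of_nonneg hl0.le hPt
  · left; exact ENNReal.rpow_ne_top_of_nonneg hl1'.le hMt

theorem pl1 {l : ℝ} (hl0 : 0 < l) (hl1 : l < 1) {f g h : ℝ → ℝ≥0∞}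
    (hf : Measurable f) (hg : Measurable g) (hh : Measurable h)
    (H : ∀ x y, f x ^ (1 - l) * g y ^ l ≤ h ((1 - l) * x + l * y)) :
    (∫⁻ x, f x) ^ (1 - l) * (∫⁻ x, g x) ^ l ≤ ∫⁻ x, h x := by
  have hl1' : 0 < 1 - l := by linarith
  have key : ∀ N : ℕ, (∫⁻ x, min (f x) N) ^ (1 - l) * (∫⁻ x, min (g x) N) ^ l ≤ ∫⁻ x, h x := by
    intro N
    refine pl1_bdd hl0 hl1 (hf.min measurable_const) (hg.min measurable_const) hh
      (N := N) (by simp) (fun x => min_le_right _ _) (fun x => min_le_right _ _) ?_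
    intro x y
    refine le_trans ?_ (H x y)
    gcongr <;> exact min_le_left _ _
  have lim : ∀ u : ℝ → ℝ≥0∞, Measurable u →
      Filter.Tendsto (fun N : ℕ => ∫⁻ x, min (u x) N) Filter.atTop (𝓝 (∫⁻ x, u x)) := by
    intro u hu
    refine lintegral_tendsto_of_tendsto_of_monotone ?_ ?_ ?_
    · intro N; exact (hu.min measurable_const).aemeasurable
    · refine .of_forall fun x => ?_
      intro a b hab
      exact min_le_min le_rfl (by exact_mod_cast hab)
    · refine .of_forall fun x => ?_
      have : Filter.Tendsto (fun N : ℕ => min (u x) (N : ℝ≥0∞)) Filter.atTop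
        (𝓝 (min (u x) ∞)) := tendsto_const_nhds.min ENNReal.tendsto_nat_nhds_top
      simpa using this
  by_cases h0 : (∫⁻ x, f x) = 0
  · simp [h0, ENNReal.zero_rpow_of_pos hl1']
  by_cases h0' : (∫⁻ x, g x) = 0
  · simp [h0', ENNReal.zero_rpow_of_pos hl0]
  refine le_of_tendsto' (ENNReal.Tendsto.mul
    ((ENNReal.continuous_rpow_const.tendsto _).comp (lim f hf)) ?_
    ((ENNReal.continuous_rpow_const.tendsto _).comp (lim g hg)) ?_) key
  · left; simp [ENNReal.rpow_eq_zero_iff, h0, hl1'.not_gt]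
  · left; simp [ENNReal.rpow_eq_zero_iff, h0', hl0.not_gt]

theorem pl_fin {l : ℝ} (hl0 : 0 < l) (hl1 : l < 1) : ∀ (k : ℕ) {f g h : (Fin k → ℝ) → ℝ≥0∞}
    (_ : Measurable f) (_ : Measurable g) (_ : Measurable h)
    (_ : ∀ x y, f x ^ (1 - l) * g y ^ l ≤ h ((1 - l) • x + l • y)),
    (∫⁻ x, f x) ^ (1 - l) * (∫⁻ x, g x) ^ l ≤ ∫⁻ x, h x := by
  intro k
  induction k with
  | zero =>
    intro f g h hf hg hh H
    have : ∀ u : (Fin 0 → ℝ) → ℝ≥0∞, ∫⁻ x, u x = u 0 := by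
      intro u
      rw [lintegral_unique]
      simp only [volume_pi, Measure.pi_empty_univ, mul_one]
      exact congrArg u (Subsingleton.elim _ _)
    rw [this, this, this]
    simpa using H 0 0
  | succ k ih =>
    intro f g h hf hg hh H
    set e := (MeasurableEquiv.piFinSuccAbove (fun _ : Fin (k+1) => ℝ) 0).symm with he
    have mp := (volume_preserving_piFinSuccAbove (fun _ : Fin (k+1) => ℝ) 0).symm
    have conv : ∀ u : (Fin (k+1) → ℝ) → ℝ≥0∞, Measurable u →
        ∫⁻ x, u x = ∫⁻ a : ℝ, ∫⁻ b : Fin k → ℝ, u (e (a, b)) := by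
      intro u hu
      rw [← mp.lintegral_comp hu]
      exact lintegral_prod _ (hu.comp e.measurable).aemeasurable
    have meas : ∀ u : (Fin (k+1) → ℝ) → ℝ≥0∞, Measurable u →
        Measurable fun a : ℝ => ∫⁻ b : Fin k → ℝ, u (e (a, b)) := by
      intro u hu
      exact Measurable.lintegral_prod_right' (hu.comp e.measurable)
    rw [conv f hf, conv g hg, conv h hh]
    refine pl1 hl0 hl1 (meas f hf) (meas g hg) (meas h hh) ?_
    intro a a'
    have ms : ∀ u : (Fin (k+1) → ℝ) → ℝ≥0∞, Measurable u → ∀ a : ℝ,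
        Measurable fun b : Fin k → ℝ => u (e (a, b)) := fun u hu a =>
      (hu.comp e.measurable).comp measurable_prodMk_left
    refine ih (ms f hf a) (ms g hg a') (ms h hh _) ?_
    intro b b'
    have : e ((1 - l) * a + l * a', (1 - l) • b + l • b') =
        (1 - l) • e (a, b) + l • e (a', b') := by
      ext i
      refine Fin.cases ?_ ?_ i
      · simp [he, MeasurableEquiv.piFinSuccAbove, Fin.insertNthEquiv]
      · intro j
        simp [he, MeasurableEquiv.piFinSuccAbove, Fin.insertNthEquiv]
    rw [this]
    exact H _ _

/-- multiplicative Brunn-Minkowski inequality in Euclidean space -/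
theorem bm_mult {n : ℕ} {l : ℝ} (hl0 : 0 < l) (hl1 : l < 1) {A B C : Set (Eu n)}
    (hA : MeasurableSet A) (hB : MeasurableSet B) (hC : MeasurableSet C)
    (H : ∀ a ∈ A, ∀ b ∈ B, (1 - l) • a + l • b ∈ C) :
    volume A ^ (1 - l) * volume B ^ l ≤ volume C := by
  have hl1' : 0 < 1 - l := by linarith
  have mp := PiLp.volume_preserving_toLp (Fin (n + 1))
  have me : Measurable (WithLp.toLp 2 : (Fin (n+1) → ℝ) → Eu n) := mp.measurable
  have e : ∀ S : Set (Eu n), MeasurableSet S →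
      volume S = ∫⁻ x : Fin (n+1) → ℝ, S.indicator 1 (WithLp.toLp 2 x) := by
    intro S hS
    rw [mp.lintegral_comp (f := S.indicator 1) (measurable_one.indicator hS)]
    simp [lintegral_indicator hS]
  rw [e A hA, e B hB, e C hC]
  refine pl_fin hl0 hl1 (n+1) ((measurable_one.indicator hA).comp me)
    ((measurable_one.indicator hB).comp me) ((measurable_one.indicator hC).comp me) ?_
  intro x y
  by_cases hx : WithLp.toLp 2 x ∈ A
  · by_cases hy : WithLp.toLp 2 y ∈ B
    · have := H _ hx _ hy
      have h2 : WithLp.toLp 2 ((1 - l) • x + l • y) ∈ C := by simpa using this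
      rw [Set.indicator_of_mem hx, Set.indicator_of_mem hy, Set.indicator_of_mem h2]
      simp
    · simp [hy, ENNReal.zero_rpow_of_pos hl0]
  · simp [hx, ENNReal.zero_rpow_of_pos hl1']


/-! ### Basic facts on the support function -/

/-- gradient of the support function -/
def Xg {n : ℕ} (K : Set (Eu n)) : Eu n → Eu n := gradient (sfn K)

section sup
variable {n : ℕ} {K : Set (Eu n)}

theorem K_nonempty (hK : IsSmoothConvexBody K) : K.Nonempty := hK.interior_nonempty.mono interior_subset

theorem inner_le_sfn (hK : IsSmoothConvexBody K) {y : Eu n} (hy : y ∈ K) (z : Eu n) : ⟪z, y⟫_ℝ ≤ sfn K z := by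
  refine le_csSup ?_ ⟨y, hy, rfl⟩
  exact (hK.compact.image (by fun_prop)).bddAbove

theorem exists_max (hK : IsSmoothConvexBody K) (z : Eu n) : ∃ y ∈ K, ⟪z, y⟫_ℝ = sfn K z := by
  have hc : ContinuousOn (fun y => ⟪z, y⟫_ℝ) K := by fun_prop
  obtain ⟨y, hy, h⟩ := hK.compact.exists_sSup_image_eq (K_nonempty hK) hc
  exact ⟨y, hy, h.symm⟩

theorem sfn_smul (hK : IsSmoothConvexBody K) {c : ℝ} (hc : 0 ≤ c) (z : Eu n) : sfn K (c • z) = c * sfn K z := by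
  apply le_antisymm
  · obtain ⟨y, hy, h⟩ := exists_max hK (c • z)
    rw [← h, real_inner_smul_left]
    exact mul_le_mul_of_nonneg_left (inner_le_sfn hK hy z) hc
  · obtain ⟨y, hy, h⟩ := exists_max hK z
    rw [← h, ← real_inner_smul_left]
    exact inner_le_sfn hK hy _

theorem sfn_pos (hK : IsSmoothConvexBody K) {z : Eu n} (hz : z ≠ 0) : 0 < sfn K z := by
  have h1 : ‖z‖ ≠ 0 := by simpa using hz
  have h2 : ‖z‖⁻¹ • z ∈ sphere (0 : Eu n) 1 := by
    simp [norm_smul, h1]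
  have := hK.pos ⟨_, h2⟩
  rw [show ((⟨_, h2⟩ : Sph n) : Eu n) = ‖z‖⁻¹ • z from rfl, sfn_smul hK (by positivity)] at this
  exact pos_of_mul_pos_right this (by positivity)

theorem sfn_diff (hK : IsSmoothConvexBody K) {z : Eu n} (hz : z ≠ 0) : DifferentiableAt ℝ (sfn K) z := by
  have := hK.smooth.contDiffAt (isOpen_compl_singleton.mem_nhds hz)
  exact this.differentiableAt (by simp)

theorem sfn_hasGrad (hK : IsSmoothConvexBody K) {z : Eu n} (hz : z ≠ 0) : HasGradientAt (sfn K) (Xg K z) z :=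
  (sfn_diff hK hz).hasGradientAt

theorem eq_grad_of_max (hK : IsSmoothConvexBody K) {z y : Eu n} (hz : z ≠ 0) (hy : y ∈ K) (h : ⟪z, y⟫_ℝ = sfn K z) :
    y = Xg K z := by
  have hmin : IsLocalMin (fun w => sfn K w - ⟪y, w⟫_ℝ) z := by
    refine Filter.Eventually.of_forall fun w => ?_
    have := inner_le_sfn hK hy w
    simp only [real_inner_comm _ y]
    linarith
  have hd : HasFDerivAt (fun w => sfn K w - ⟪y, w⟫_ℝ)
      (InnerProductSpace.toDual ℝ _ (Xg K z) - innerSL ℝ y) z :=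
    (sfn_hasGrad hK hz).hasFDerivAt.sub (innerSL ℝ y).hasFDerivAt
  have h0 := hmin.hasFDerivAt_eq_zero hd
  have : ∀ v, ⟪Xg K z, v⟫_ℝ = ⟪y, v⟫_ℝ := by
    intro v
    have := congrArg (fun f => f v) h0
    simp at this
    linarith
  exact (ext_inner_right ℝ this).symm

theorem grad_mem (hK : IsSmoothConvexBody K) {z : Eu n} (hz : z ≠ 0) : Xg K z ∈ K := by
  obtain ⟨y, hy, h⟩ := exists_max hK z
  rwa [← eq_grad_of_max hK hz hy h]

theorem inner_grad (hK : IsSmoothConvexBody K) {z : Eu n} (hz : z ≠ 0) : ⟪z, Xg K z⟫_ℝ = sfn K z := by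
  obtain ⟨y, hy, h⟩ := exists_max hK z
  rwa [← eq_grad_of_max hK hz hy h]

theorem inner_grad_le (hK : IsSmoothConvexBody K) {z : Eu n} (hz : z ≠ 0) (x : Eu n) : ⟪x, Xg K z⟫_ℝ ≤ sfn K x :=
  inner_le_sfn hK (grad_mem hK hz) x

theorem grad_smul (hK : IsSmoothConvexBody K) {c : ℝ} (hc : 0 < c) {z : Eu n} (hz : z ≠ 0) : Xg K (c • z) = Xg K z := by
  have hcz : c • z ≠ 0 := smul_ne_zero hc.ne' hz
  refine eq_grad_of_max hK hz (grad_mem hK hcz) ?_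
  have := inner_grad hK hcz
  rw [sfn_smul hK hc.le, real_inner_smul_left] at this
  exact mul_left_cancel₀ hc.ne' this

theorem grad_contDiff (hK : IsSmoothConvexBody K) {z : Eu n} (hz : z ≠ 0) : ContDiffAt ℝ 2 (Xg K) z := by
  have h1 : ContDiffAt ℝ 3 (sfn K) z :=
    (hK.smooth.contDiffAt (isOpen_compl_singleton.mem_nhds hz)).of_le (by
      have : (3 : ℕ∞) ≤ ⊤ := le_top
      exact WithTop.coe_le_coe.2 this)
  have h2 : ContDiffAt ℝ 2 (fderiv ℝ (sfn K)) z := h1.fderiv_right (by norm_num)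
  exact (InnerProductSpace.toDual ℝ (Eu n)).symm.toContinuousLinearEquiv.contDiff.contDiffAt.comp z h2

theorem grad_hasFDeriv (hK : IsSmoothConvexBody K) {z : Eu n} (hz : z ≠ 0) : HasFDerivAt (Xg K) (hessA K z) z :=
  ((grad_contDiff hK hz).differentiableAt (by norm_num)).hasFDerivAt

theorem hess_cont (hK : IsSmoothConvexBody K) {z : Eu n} (hz : z ≠ 0) : ContinuousAt (hessA K) z :=
  ((grad_contDiff hK hz).fderiv_right (m := 1) (by norm_num)).continuousAt

theorem grad_cont (hK : IsSmoothConvexBody K) {z : Eu n} (hz : z ≠ 0) : ContinuousAt (Xg K) z :=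
  (grad_contDiff hK hz).continuousAt

theorem sfn_contAt (hK : IsSmoothConvexBody K) {z : Eu n} (hz : z ≠ 0) : ContinuousAt (sfn K) z :=
  (sfn_diff hK hz).continuousAt

theorem hess_self (hK : IsSmoothConvexBody K) {z : Eu n} (hz : z ≠ 0) : hessA K z z = 0 := by
  have h1 : HasDerivAt (fun c : ℝ => Xg K (c • z)) (hessA K z z) 1 := by
    have hc : HasDerivAt (fun c : ℝ => c • z) z 1 := by
      simpa using (hasDerivAt_id (1 : ℝ)).smul_const z
    have := (grad_hasFDeriv hK (z := (1 : ℝ) • z) (by simpa using hz)).comp_hasDerivAt (1 : ℝ) hc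
    rw [one_smul] at this
    exact this
  have h2 : HasDerivAt (fun c : ℝ => Xg K (c • z)) 0 1 := by
    refine (hasDerivAt_const (1 : ℝ) (Xg K z)).congr_of_eventuallyEq ?_
    filter_upwards [lt_mem_nhds (zero_lt_one' ℝ)] with c hc
    exact grad_smul hK hc hz
  exact h1.unique h2

theorem hess_inner (hK : IsSmoothConvexBody K) {z : Eu n} (hz : z ≠ 0) (v : Eu n) : ⟪hessA K z v, z⟫_ℝ = 0 := by
  have h1 : HasFDerivAt (fun w => ⟪w, Xg K w⟫_ℝ) _ z :=
    (hasFDerivAt_id z).inner ℝ (grad_hasFDeriv hK hz)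
  have h2 : HasFDerivAt (fun w => ⟪w, Xg K w⟫_ℝ) (InnerProductSpace.toDual ℝ _ (Xg K z)) z := by
    refine (sfn_hasGrad hK hz).hasFDerivAt.congr_of_eventuallyEq ?_
    filter_upwards [isOpen_compl_singleton.mem_nhds hz] with w hw
    exact inner_grad hK hw
  have := congrArg (fun f => f v) (h1.unique h2)
  simp [fderivInnerCLM_apply, real_inner_comm] at this
  rw [real_inner_comm]
  linarith [real_inner_comm v (Xg K z)]

theorem hess_smul (hK : IsSmoothConvexBody K) {c : ℝ} (hc : 0 < c) {z : Eu n} (hz : z ≠ 0) :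
    hessA K (c • z) = c⁻¹ • hessA K z := by
  have hcz : c • z ≠ 0 := smul_ne_zero hc.ne' hz
  have h1 : HasFDerivAt (fun w => Xg K (c • w)) ((hessA K (c • z)).comp
      (c • ContinuousLinearMap.id ℝ (Eu n))) z :=
    (grad_hasFDeriv hK hcz).comp z ((hasFDerivAt_id z).const_smul c)
  have h2 : HasFDerivAt (fun w => Xg K (c • w)) (hessA K z) z := by
    refine (grad_hasFDeriv hK hz).congr_of_eventuallyEq ?_
    filter_upwards [isOpen_compl_singleton.mem_nhds hz] with w hw
    exact grad_smul hK hc hw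
  have h3 := h1.unique h2
  ext1 v
  have := congrArg (fun f => f v) h3
  simp at this
  rw [ContinuousLinearMap.smul_apply, ← this, smul_smul, inv_mul_cancel₀ hc.ne', one_smul]

/-- the radial parametrisation -/
def Phi (K : Set (Eu n)) (z : Eu n) : Eu n := ‖z‖ • Xg K z

theorem sph_ne (x : Sph n) : (x : Eu n) ≠ 0 := by
  intro h
  have := x.2
  rw [h] at this
  simp at this

theorem sph_norm (x : Sph n) : ‖(x : Eu n)‖ = 1 := by simpa using x.2

theorem hess_ker (hK : IsSmoothConvexBody K) {z v : Eu n} (hz : z ≠ 0) (h : hessA K z v = 0) : ∃ c : ℝ, v = c • z := by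
  have h1 : ‖z‖ ≠ 0 := by simpa using hz
  have h1' : 0 < ‖z‖ := by simpa using hz
  set x : Eu n := ‖z‖⁻¹ • z with hx
  have h2 : x ∈ sphere (0 : Eu n) 1 := by
    simp [hx, norm_smul, h1]
  have hx1 : ⟪x, x⟫_ℝ = 1 := by
    rw [real_inner_self_eq_norm_sq]; simp at h2; simp [h2]
  have hx0 : x ≠ 0 := sph_ne ⟨x, h2⟩
  have hA : hessA K x v = 0 := by
    rw [hx, hess_smul hK (by positivity) hz]; simp [h]
  by_contra hcon
  set w := v - ⟪x, v⟫_ℝ • x with hw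
  have hw0 : w ≠ 0 := by
    intro h0
    apply hcon
    refine ⟨⟪x, v⟫_ℝ * ‖z‖⁻¹, ?_⟩
    rw [← smul_smul, ← hx]
    exact sub_eq_zero.1 h0
  have := hK.posdef ⟨x, h2⟩ w hw0
  have e1 : hessA K x w = 0 := by
    rw [hw, map_sub, map_smul, hA, hess_self hK hx0]; simp
  have e2 : tens x w = 0 := by
    have h3 : ‖x‖ = 1 := by simpa using h2
    simp [tens, hw, inner_sub_right, real_inner_smul_right, h3]
  simp [e1, e2] at this

theorem Phi_inj (hK : IsSmoothConvexBody K) : Set.InjOn (Phi K) {0}ᶜ := by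
  have le_aux : ∀ z w : Eu n, z ≠ 0 → w ≠ 0 → Phi K z = Phi K w → ‖z‖ ≤ ‖w‖ := by
    intro z w hz hw h
    have hz1 : 0 < ‖z‖ := by simpa using hz
    have hw1 : 0 < ‖w‖ := by simpa using hw
    have h1 := inner_grad_le hK hw z
    have h2 := congrArg (fun p => ⟪z, p⟫_ℝ) h
    simp only [Phi, real_inner_smul_right, inner_grad hK hz] at h2
    have h3 := sfn_pos hK hz
    have : ‖z‖ * sfn K z ≤ ‖w‖ * sfn K z := by rw [h2]; gcongr
    exact le_of_mul_le_mul_right this h3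
  intro z hz w hw h
  have hz : z ≠ 0 := hz
  have hw : w ≠ 0 := hw
  have hz1 : 0 < ‖z‖ := by simpa using hz
  have hn : ‖z‖ = ‖w‖ := le_antisymm (le_aux z w hz hw h) (le_aux w z hw hz h.symm)
  have hX : Xg K z = Xg K w := by
    simp only [Phi, ← hn] at h
    exact smul_right_injective _ hz1.ne' h
  set y := Xg K z with hy
  have hyK : y ∈ K := grad_mem hK hz
  have ez : ⟪z, y⟫_ℝ = sfn K z := inner_grad hK hz
  have ew : ⟪w, y⟫_ℝ = sfn K w := by rw [hX]; exact inner_grad hK hw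
  have seg : ∀ s ∈ Set.Icc (0 : ℝ) 1, z + s • (w - z) ≠ 0 → Xg K (z + s • (w - z)) = y := by
    intro s hs h0
    refine (eq_grad_of_max hK h0 hyK ?_).symm
    refine le_antisymm (inner_le_sfn hK hyK _) ?_
    obtain ⟨p, hp, h1⟩ := exists_max hK (z + s • (w - z))
    rw [← h1]
    have a1 := inner_le_sfn hK hp z
    have a2 := inner_le_sfn hK hp w
    simp only [inner_add_left, real_inner_smul_left, inner_sub_left, ez, ew]
    nlinarith [hs.1, hs.2, mul_le_mul_of_nonneg_left a2 hs.1,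
      mul_le_mul_of_nonneg_left a1 (sub_nonneg.2 hs.2)]
  have hd : HasDerivAt (fun s : ℝ => Xg K (z + s • (w - z))) (hessA K z (w - z)) 0 := by
    have hc : HasDerivAt (fun s : ℝ => z + s • (w - z)) (w - z) 0 := by
      simpa using ((hasDerivAt_id (0 : ℝ)).smul_const (w - z)).const_add z
    have := (grad_hasFDeriv hK (z := z + (0 : ℝ) • (w - z)) (by simpa using hz)).comp_hasDerivAt
      (0 : ℝ) hc
    rw [zero_smul, add_zero] at this
    exact this
  have hd2 : HasDerivWithinAt (fun s : ℝ => Xg K (z + s • (w - z))) 0 (Set.Icc 0 1) 0 := by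
    refine (hasDerivWithinAt_const (0 : ℝ) _ y).congr_of_eventuallyEq ?_ (by simp [hy])
    have hcz : ContinuousAt (fun s : ℝ => z + s • (w - z)) 0 := by fun_prop
    have : ∀ᶠ s : ℝ in 𝓝 0, z + s • (w - z) ≠ 0 := by
      apply hcz.eventually_ne
      simpa using hz
    filter_upwards [self_mem_nhdsWithin, nhdsWithin_le_nhds this] with s hs h0
    exact seg s hs h0
  have hA : hessA K z (w - z) = 0 :=
    (uniqueDiffOn_Icc zero_lt_one 0 (by simp)).eq_deriv _ hd.hasDerivWithinAt hd2
  obtain ⟨c, hc⟩ := hess_ker hK hz hA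
  have hwc : w = (1 + c) • z := by rw [add_smul, one_smul, ← hc]; abel
  have : |1 + c| = 1 := by
    have := hn
    rw [hwc, norm_smul] at this
    have h4 : (|1 + c| - 1) * ‖z‖ = 0 := by rw [Real.norm_eq_abs] at this; linarith
    rcases mul_eq_zero.1 h4 with h5 | h5
    · linarith
    · exact absurd h5 hz1.ne'
  rcases abs_eq (zero_le_one' ℝ) |>.1 this with h5 | h5
  · rw [hwc, h5, one_smul]
  · exfalso
    have h6 : w = -z := by rw [hwc, h5]; simp
    have p1 := sfn_pos hK hz
    have p2 := sfn_pos hK hw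
    rw [← ez] at p1
    rw [← ew, h6, inner_neg_left] at p2
    linarith

/-- derivative of the radial parametrisation -/
def dPhi (K : Set (Eu n)) (z : Eu n) : Eu n →L[ℝ] Eu n :=
  ‖z‖ • hessA K z + (innerSL ℝ (‖z‖⁻¹ • z)).smulRight (Xg K z)

theorem Phi_hasFDeriv (hK : IsSmoothConvexBody K) {z : Eu n} (hz : z ≠ 0) : HasFDerivAt (Phi K) (dPhi K z) z := by
  have h1 : HasFDerivAt (fun w : Eu n => ‖w‖) (innerSL ℝ (‖z‖⁻¹ • z)) z := by
    have h2 := (hasStrictFDerivAt_norm_sq z).hasFDerivAt.sqrt (by simpa using hz)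
    have h3 : (fun y : Eu n => √(‖y‖ ^ 2)) = fun y => ‖y‖ := by
      funext y; exact Real.sqrt_sq (norm_nonneg _)
    rw [h3] at h2
    refine h2.congr_fderiv ?_
    · ext v
      have : ‖z‖ ≠ 0 := by simpa using hz
      simp [real_inner_smul_left]
      field_simp
  exact h1.smul (grad_hasFDeriv hK hz)

theorem det_id_add (u x : Eu n) :
    LinearMap.det ((ContinuousLinearMap.id ℝ (Eu n) + (innerSL ℝ x).smulRight u :
      Eu n →L[ℝ] Eu n) : Eu n →ₗ[ℝ] Eu n) = 1 + ⟪x, u⟫_ℝ := by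
  set b := EuclideanSpace.basisFun (Fin (n+1)) ℝ
  rw [← LinearMap.det_toMatrix b.toBasis]
  have : LinearMap.toMatrix b.toBasis b.toBasis
      ((ContinuousLinearMap.id ℝ (Eu n) + (innerSL ℝ x).smulRight u :
      Eu n →L[ℝ] Eu n) : Eu n →ₗ[ℝ] Eu n) =
      1 + Matrix.replicateCol Unit (fun i => u i) * Matrix.replicateRow Unit (fun i => x i) := by
    ext i j
    simp [LinearMap.toMatrix_apply, b, Matrix.one_apply, Matrix.mul_apply, EuclideanSpace.inner_eq_star_dotProduct, mul_comm, eq_comm, Pi.single_apply]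
  rw [this, Matrix.det_one_add_replicateCol_mul_replicateRow]
  simp [PiLp.inner_apply, dotProduct, mul_comm]

theorem det_dPhi (hK : IsSmoothConvexBody K) (x : Sph n) : (dPhi K (x : Eu n)).det = dens K x := by
  have hx := sph_ne x
  have hx1 : ⟪(x : Eu n), x⟫_ℝ = 1 := by rw [real_inner_self_eq_norm_sq]; simp
  set M : Eu n →L[ℝ] Eu n := hessA K (x : Eu n) + tens (x : Eu n) with hM
  have inj : Function.Injective M := by
    rw [injective_iff_map_eq_zero]
    intro v hv
    by_contra h0
    have := hK.posdef x v h0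
    rw [← hM, hv] at this
    simp at this
  have surj : Function.Surjective (M : Eu n →ₗ[ℝ] Eu n) :=
    LinearMap.surjective_of_injective (f := (M : Eu n →ₗ[ℝ] Eu n)) inj
  obtain ⟨u, hu⟩ := surj (Xg K x - x)
  have hu : M u = Xg K x - x := hu
  have hMx : ∀ v, ⟪(x : Eu n), M v⟫_ℝ = ⟪(x : Eu n), v⟫_ℝ := by
    intro v
    have := hess_inner hK hx v
    rw [real_inner_comm] at this
    simp [hM, tens, inner_add_right, this, real_inner_smul_right]
  have e : dPhi K (x : Eu n) =
      M.comp (ContinuousLinearMap.id ℝ (Eu n) + (innerSL ℝ (x : Eu n)).smulRight u) := by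
    ext1 v
    simp only [dPhi, ContinuousLinearMap.comp_apply, ContinuousLinearMap.add_apply,
      ContinuousLinearMap.smulRight_apply, map_add, map_smul, hu]
    simp [hM, tens, smul_sub]
  have : (dPhi K (x : Eu n)).det = LinearMap.det (M : Eu n →ₗ[ℝ] Eu n) *
      LinearMap.det ((ContinuousLinearMap.id ℝ (Eu n) + (innerSL ℝ (x : Eu n)).smulRight u :
      Eu n →L[ℝ] Eu n) : Eu n →ₗ[ℝ] Eu n) := by
    rw [e, ← LinearMap.det_comp]; rfl
  rw [this, det_id_add, ← hMx, hu, inner_sub_right, hx1, inner_grad hK hx, dens, rK]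
  ring

theorem dPhi_smul (hK : IsSmoothConvexBody K) {c : ℝ} (hc : 0 < c) {z : Eu n} (hz : z ≠ 0) : dPhi K (c • z) = dPhi K z := by
  have : ‖z‖ ≠ 0 := by simpa using hz
  have e : (‖c • z‖⁻¹ • c • z) = ‖z‖⁻¹ • z := by
    rw [norm_smul, Real.norm_of_nonneg hc.le, smul_smul]; congr 1; field_simp
  rw [dPhi, hess_smul hK hc hz, grad_smul hK hc hz, e, dPhi, smul_smul, norm_smul,
    Real.norm_of_nonneg hc.le]
  congr 2; field_simp

end sup


/-! ### Volume in radial coordinates -/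

/-- star shaped domain without the origin -/
def Om {n : ℕ} (ρ : Sph n → ℝ) : Set (Eu n) :=
  {z | ∃ x : Sph n, ∃ r : ℝ, 0 < r ∧ r < ρ x ∧ z = r • (x : Eu n)}

abbrev polH (n : ℕ) := homeomorphUnitSphereProd (Eu n)

theorem polH_eq {n : ℕ} (z : ({0}ᶜ : Set (Eu n))) :
    (z : Eu n) = ((polH n z).2 : ℝ) • ((polH n z).1 : Eu n) := by
  have h : ‖(z : Eu n)‖ ≠ 0 := norm_ne_zero_iff.2 z.2
  simp [polH, h]

theorem Om_iff {n : ℕ} (ρ : Sph n → ℝ) (z : ({0}ᶜ : Set (Eu n))) :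
    (z : Eu n) ∈ Om ρ ↔ ((polH n z).2 : ℝ) < ρ (polH n z).1 := by
  constructor
  · rintro ⟨x, r, hr, h, e⟩
    have : polH n z = (x, ⟨r, hr⟩) := by
      rw [← (polH n).apply_symm_apply (x, ⟨r, hr⟩)]
      congr 1
      ext1
      simp [polH, e]
    rw [this]; exact h
  · intro h
    exact ⟨_, _, (polH n z).2.2, h, polH_eq z⟩

theorem Om_ne {n : ℕ} {ρ : Sph n → ℝ} {z : Eu n} (hz : z ∈ Om ρ) : z ≠ 0 := by
  obtain ⟨x, r, hr, h, e⟩ := hz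
  rw [e]; exact smul_ne_zero hr.ne' (sph_ne x)

theorem Om_meas {n : ℕ} {ρ : Sph n → ℝ} (hρ : Continuous ρ) : MeasurableSet (Om ρ) := by
  have : Om ρ = (Subtype.val : ({0}ᶜ : Set (Eu n)) → Eu n) ''
      {z | ((polH n z).2 : ℝ) < ρ (polH n z).1} := by
    ext z
    constructor
    · intro h
      exact ⟨⟨z, Om_ne h⟩, (Om_iff ρ ⟨z, Om_ne h⟩).1 h, rfl⟩
    · rintro ⟨w, hw, rfl⟩
      exact (Om_iff ρ w).2 hw
  rw [this]
  refine (MeasurableEmbedding.subtype_coe (measurableSet_singleton _).compl).measurableSet_image.2 ?_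
  refine IsOpen.measurableSet (isOpen_lt ?_ ?_)
  · exact continuous_subtype_val.comp (continuous_snd.comp (polH n).continuous)
  · exact hρ.comp (continuous_fst.comp (polH n).continuous)

theorem lint_polar {n : ℕ} (f : Eu n → ℝ≥0∞) (F : Sph n × Set.Ioi (0:ℝ) → ℝ≥0∞) (hF : Measurable F)
    (h : ∀ x : Sph n, ∀ r : Set.Ioi (0:ℝ), f ((r : ℝ) • (x : Eu n)) = F (x, r)) :
    ∫⁻ z, f z = ∫⁻ x : Sph n, ∫⁻ r, F (x, r) ∂(Measure.volumeIoiPow n) ∂sphMeas n := by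
  have h0 : ∫⁻ z, f z = ∫⁻ z in ({0}ᶜ : Set (Eu n)), f z := by
    rw [restrict_compl_singleton]
  rw [h0, ← lintegral_subtype_comap (measurableSet_singleton _).compl]
  have h1 := (Measure.measurePreserving_homeomorphUnitSphereProd
    (volume : Measure (Eu n))).lintegral_comp hF
  have hd : Module.finrank ℝ (Eu n) - 1 = n := by simp
  rw [hd] at h1
  rw [← lintegral_prod _ hF.aemeasurable]
  rw [sphMeas, ← h1]
  refine lintegral_congr fun z => ?_
  have := h (polH n z).1 (polH n z).2
  rw [← polH_eq] at this
  exact this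

section
variable {n : ℕ} {K : Set (Eu n)}

theorem grad_contS (hK : IsSmoothConvexBody K) : Continuous fun x : Sph n => Xg K x :=
  continuous_iff_continuousAt.2 fun x =>
    ContinuousAt.comp (f := fun x : Sph n => (x : Eu n)) (grad_cont hK (sph_ne x))
      continuous_subtype_val.continuousAt

theorem hess_contS (hK : IsSmoothConvexBody K) : Continuous fun x : Sph n => hessA K x :=
  continuous_iff_continuousAt.2 fun x =>
    ContinuousAt.comp (f := fun x : Sph n => (x : Eu n)) (hess_cont hK (sph_ne x))
      continuous_subtype_val.continuousAt

theorem sfn_contS (hK : IsSmoothConvexBody K) : Continuous fun x : Sph n => sfn K x :=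
  continuous_iff_continuousAt.2 fun x =>
    ContinuousAt.comp (f := fun x : Sph n => (x : Eu n)) (sfn_contAt hK (sph_ne x))
      continuous_subtype_val.continuousAt

theorem dens_contS (hK : IsSmoothConvexBody K) : Continuous fun x : Sph n => dens K x := by
  refine (sfn_contS hK).mul ?_
  have h : Continuous fun x : Sph n => (hessA K x + tens (x : Eu n)) := by
    refine (hess_contS hK).add ?_
    have : Continuous fun x : Eu n => tens x := by
      have e : (fun x : Eu n => tens x) = fun x => ContinuousLinearMap.smulRightL ℝ (Eu n) (Eu n)
        (innerSL ℝ x) x := by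
        funext x; rfl
      rw [e]
      fun_prop
    exact this.comp continuous_subtype_val
  exact ContinuousLinearMap.continuous_det.comp h

theorem Phi_image_meas (hK : IsSmoothConvexBody K) {ρ : Sph n → ℝ} (hρ : Continuous ρ) : MeasurableSet (Phi K '' Om ρ) :=
  measurable_image_of_fderivWithin (Om_meas hρ)
    (fun z hz => (Phi_hasFDeriv hK (Om_ne hz)).hasFDerivWithinAt)
    ((Phi_inj hK).mono fun z hz => Om_ne hz)

theorem contS_integrable {E : Type*} [NormedAddCommGroup E] {f : Sph n → E} (hf : Continuous f) :
    Integrable f (sphMeas n) := by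
  haveI : IsFiniteMeasure (sphMeas n) := by unfold sphMeas; infer_instance
  have h := hf.continuousOn.integrableOn_compact (μ := sphMeas n) (isCompact_univ (X := Sph n))
  rwa [integrableOn_univ] at h

theorem vol_Phi (hK : IsSmoothConvexBody K) (hpos : ∀ x : Sph n, 0 < dens K x) {ρ : Sph n → ℝ} (hρ : Continuous ρ)
    (hp : ∀ x, 0 < ρ x) : volume (Phi K '' Om ρ) =
      ENNReal.ofReal ((∫ x : Sph n, dens K x * ρ x ^ (n + 1) ∂sphMeas n) / (n + 1)) := by
  rw [← lintegral_abs_det_fderiv_eq_addHaar_image volume (Om_meas hρ)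
    (fun z hz => (Phi_hasFDeriv hK (Om_ne hz)).hasFDerivWithinAt)
    ((Phi_inj hK).mono fun z hz => Om_ne hz)]
  rw [← lintegral_indicator (Om_meas hρ)]
  set T : Set (Sph n × Set.Ioi (0:ℝ)) := {p | (p.2 : ℝ) < ρ p.1} with hT
  have hTm : MeasurableSet T := by
    refine IsOpen.measurableSet (isOpen_lt ?_ ?_)
    · exact continuous_subtype_val.comp continuous_snd
    · exact hρ.comp continuous_fst
  rw [lint_polar _ (T.indicator fun p => ENNReal.ofReal (dens K p.1))]
  · have : ∀ x : Sph n, ∫⁻ r, T.indicator (fun p => ENNReal.ofReal (dens K p.1)) (x, r)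
        ∂(Measure.volumeIoiPow n) =
        ENNReal.ofReal (dens K x * ρ x ^ (n + 1) / (n + 1)) := by
      intro x
      have e : (fun r => T.indicator (fun p => ENNReal.ofReal (dens K p.1)) (x, r)) =
          (Set.Iio (⟨ρ x, hp x⟩ : Set.Ioi (0:ℝ))).indicator fun _ => ENNReal.ofReal (dens K x) := by
        funext r
        by_cases hr : (r : ℝ) < ρ x
        · rw [Set.indicator_of_mem (show (x, r) ∈ T from hr), Set.indicator_of_mem]
          exact hr
        · rw [Set.indicator_of_notMem (show (x, r) ∉ T from hr), Set.indicator_of_notMem]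
          exact hr
      rw [e, lintegral_indicator measurableSet_Iio, setLIntegral_const,
        Measure.volumeIoiPow_apply_Iio, ← ENNReal.ofReal_mul (hpos x).le, mul_div_assoc]
    simp only [this]
    rw [← ofReal_integral_eq_lintegral_ofReal]
    · rw [integral_div]
    · exact (contS_integrable ((dens_contS hK).mul (hρ.pow _))).div_const _
    · exact Filter.Eventually.of_forall fun x => by
        have := hpos x
        have := hp x
        positivity
  · refine Measurable.indicator ?_ hTm
    exact ENNReal.measurable_ofReal.comp ((dens_contS hK).measurable.comp measurable_fst)
  · intro x r
    have hne : (r : ℝ) • (x : Eu n) ≠ 0 := smul_ne_zero r.2.ne' (sph_ne x)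
    have hiff : (r : ℝ) • (x : Eu n) ∈ Om ρ ↔ (x, r) ∈ T := by
      rw [Om_iff ρ ⟨_, hne⟩]
      have : polH n ⟨_, hne⟩ = (x, r) := by
        rw [← (polH n).apply_symm_apply (x, r)]
        congr 1
      rw [this]; rfl
    by_cases hr : (x, r) ∈ T
    · rw [Set.indicator_of_mem hr, Set.indicator_of_mem (hiff.2 hr), dPhi_smul hK r.2 (sph_ne x),
        det_dPhi hK, abs_of_pos (hpos x)]
    · rw [Set.indicator_of_notMem hr, Set.indicator_of_notMem (fun h => hr (hiff.1 h))]

end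


/-! ### The linearised Brunn-Minkowski inequality -/

instance {n : ℕ} : IsFiniteMeasure (sphMeas n) := by unfold sphMeas; infer_instance

instance {n : ℕ} : Nonempty (Sph n) :=
  ⟨⟨EuclideanSpace.single 0 1, by simp⟩⟩

instance {n : ℕ} : NeZero (sphMeas n) := ⟨by
  unfold sphMeas; exact Measure.toSphere_ne_zero _⟩

theorem nrm_mem {n : ℕ} {z : Eu n} (hz : z ≠ 0) : ‖z‖⁻¹ • z ∈ sphere (0 : Eu n) 1 := by
  have h1 : ‖z‖ ≠ 0 := norm_ne_zero_iff.2 hz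
  simp [norm_smul, h1]

theorem nrm_eq {n : ℕ} {z : Eu n} (hz : z ≠ 0) : z = ‖z‖ • (‖z‖⁻¹ • z) := by
  have h1 : ‖z‖ ≠ 0 := norm_ne_zero_iff.2 hz
  rw [smul_smul, mul_inv_cancel₀ h1, one_smul]

section
variable {n : ℕ} {K : Set (Eu n)}

theorem exists_ray (hK : IsSmoothConvexBody K) {p : Eu n} (hp : p ≠ 0) :
    ∃ x : Sph n, ∃ r : ℝ, 0 < r ∧ p = r • Xg K x := by
  have hc : Continuous fun y : Sph n => ⟪p, (y : Eu n)⟫_ℝ / sfn K y :=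
    Continuous.div (by fun_prop) (sfn_contS hK) fun y => (hK.pos y).ne'
  obtain ⟨x, -, hx⟩ := (isCompact_univ (X := Sph n)).exists_isMaxOn Set.univ_nonempty
    hc.continuousOn
  set r := ⟪p, (x : Eu n)⟫_ℝ / sfn K x with hr
  have hx' : ∀ y : Sph n, ⟪p, (y : Eu n)⟫_ℝ / sfn K y ≤ r := fun y => hx (Set.mem_univ y)
  have hx2 : ∀ y : Sph n, ⟪p, (y : Eu n)⟫_ℝ ≤ r * sfn K y := fun y =>
    (div_le_iff₀ (hK.pos y)).1 (hx' y)
  have hx3 : ∀ z : Eu n, z ≠ 0 → ⟪p, z⟫_ℝ ≤ r * sfn K z := by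
    intro z hz
    have h1 := hx2 ⟨_, nrm_mem hz⟩
    have h2 : 0 < ‖z‖ := norm_pos_iff.2 hz
    rw [nrm_eq hz, real_inner_smul_right, sfn_smul hK h2.le]
    simp only at h1
    nlinarith
  have hr0 : 0 < r := by
    have h1 := hx3 p hp
    have h2 := sfn_pos hK hp
    rw [real_inner_self_eq_norm_sq] at h1
    have h3 : 0 < ‖p‖ ^ 2 := by have := norm_pos_iff.2 hp; positivity
    by_contra h
    nlinarith
  refine ⟨x, r, hr0, ?_⟩
  have hmin : IsLocalMin (fun w => r * sfn K w - ⟪p, w⟫_ℝ) x := by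
    filter_upwards [isOpen_compl_singleton.mem_nhds (sph_ne x)] with w hw
    have h1 := hx3 w hw
    have h2 : ⟪p, (x : Eu n)⟫_ℝ = r * sfn K x := by
      rw [hr, div_mul_cancel₀ _ (hK.pos x).ne']
    rw [h2]; linarith
  have hd : HasFDerivAt (fun w => r * sfn K w - ⟪p, w⟫_ℝ)
      (r • InnerProductSpace.toDual ℝ _ (Xg K x) - innerSL ℝ p) x :=
    ((sfn_hasGrad hK (sph_ne x)).hasFDerivAt.const_mul r).sub (innerSL ℝ p).hasFDerivAt
  have h0 := hmin.hasFDerivAt_eq_zero hd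
  refine (ext_inner_right ℝ fun v => ?_)
  have := congrArg (fun f => f v) h0
  simp at this
  rw [real_inner_smul_left]
  linarith

theorem Phi_smul_sph (hK : IsSmoothConvexBody K) {r : ℝ} (hr : 0 < r) (x : Sph n) : Phi K (r • (x : Eu n)) = r • Xg K x := by
  rw [Phi, grad_smul hK hr (sph_ne x), norm_smul, sph_norm, Real.norm_of_nonneg hr.le, mul_one]

theorem mem_Phi_Om (hK : IsSmoothConvexBody K) {ρ : Sph n → ℝ} {r : ℝ} {x : Sph n} (hr : 0 < r) (h : r < ρ x) :
    r • Xg K x ∈ Phi K '' Om ρ :=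
  ⟨r • (x : Eu n), ⟨x, r, hr, h, rfl⟩, Phi_smul_sph hK hr x⟩

theorem Phi_Om_mem (hK : IsSmoothConvexBody K) {ρ : Sph n → ℝ} {p : Eu n} (h : p ∈ Phi K '' Om ρ) :
    ∃ x : Sph n, ∃ r : ℝ, 0 < r ∧ r < ρ x ∧ p = r • Xg K x := by
  obtain ⟨z, ⟨x, r, hr, h, rfl⟩, rfl⟩ := h
  exact ⟨x, r, hr, h, Phi_smul_sph hK hr x⟩

theorem K_sub (hK : IsSmoothConvexBody K) : K ⊆ Phi K '' Om (fun _ => 2) ∪ {0} := by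
  intro p hp
  by_cases h0 : p = 0
  · right; exact h0
  left
  obtain ⟨x, r, hr, e⟩ := exists_ray hK h0
  have h1 := inner_le_sfn hK hp x
  have h2 := inner_grad hK (sph_ne x)
  have h3 := hK.pos x
  rw [e]
  refine mem_Phi_Om hK hr ?_
  rw [e, real_inner_smul_right, h2] at h1
  have : r ≤ 1 := by
    by_contra h
    nlinarith
  linarith

theorem vol_K_le (hK : IsSmoothConvexBody K) (hpos : ∀ x : Sph n, 0 < dens K x) : volume K ≤
    ENNReal.ofReal (2 ^ (n + 1) * (∫ x : Sph n, dens K x ∂sphMeas n) / (n + 1)) := by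
  calc volume K ≤ volume (Phi K '' Om (fun _ => 2) ∪ {0}) := measure_mono (K_sub hK)
    _ ≤ volume (Phi K '' Om (fun _ => 2)) + volume {0} := measure_union_le _ _
    _ = volume (Phi K '' Om (fun _ => 2)) := by simp
    _ = _ := by
      rw [vol_Phi hK hpos continuous_const (fun _ => by norm_num), integral_mul_const, mul_comm]

theorem bm_step (hK : IsSmoothConvexBody K) (hpos : ∀ x : Sph n, 0 < dens K x) {ρ Λ : Sph n → ℝ} (hρ : Continuous ρ)
    (hρp : ∀ x, 0 < ρ x) (hΛ : Continuous Λ) (hΛp : ∀ x, 0 < Λ x)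
    (H : ∀ x y : Sph n, ρ y * ⟪Xg K y, (x : Eu n)⟫_ℝ ≤ Λ x) {l : ℝ} (hl0 : 0 < l) (hl1 : l < 1) :
    (∫ x : Sph n, dens K x ∂sphMeas n) ^ (1 - l) *
      (∫ x : Sph n, dens K x * ρ x ^ (n + 1) ∂sphMeas n) ^ l ≤
      ∫ x : Sph n, dens K x * (1 - l + l * (Λ x / sfn K x)) ^ (n + 1) ∂sphMeas n := by
  set σ : Sph n → ℝ := fun x => 1 - l + l * (Λ x / sfn K x) with hσ
  have hσc : Continuous σ := by
    have : Continuous fun x : Sph n => Λ x / sfn K x :=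
      hΛ.div (sfn_contS hK) fun y => (hK.pos y).ne'
    fun_prop
  have hσp : ∀ x, 0 < σ x := by
    intro x
    have := div_pos (hΛp x) (hK.pos x)
    have := mul_pos hl0 this
    simp only [hσ]; linarith
  have key := bm_mult hl0 hl1 (Phi_image_meas hK (ρ := fun _ => 1) continuous_const)
    (Phi_image_meas hK hρ) ((Phi_image_meas hK hσc).union (measurableSet_singleton (0 : Eu n))) ?_
  · have h0 : volume (Phi K '' Om σ ∪ {0}) ≤ volume (Phi K '' Om σ) := by
      refine (measure_union_le _ _).trans ?_
      simp
    have key := key.trans h0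
    rw [vol_Phi hK hpos continuous_const (fun _ => by norm_num), vol_Phi hK hpos hρ hρp,
      vol_Phi hK hpos hσc hσp] at key
    have hV : 0 ≤ ∫ x : Sph n, dens K x ∂sphMeas n := integral_nonneg fun x => (hpos x).le
    have hI : 0 ≤ ∫ x : Sph n, dens K x * ρ x ^ (n + 1) ∂sphMeas n :=
      integral_nonneg fun x => by
        have := hpos x
        have := hρp x
        positivity
    have hW : 0 ≤ ∫ x : Sph n, dens K x * σ x ^ (n + 1) ∂sphMeas n :=
      integral_nonneg fun x => by
        have := hpos x
        have := hσp x
        positivity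
    simp only [one_pow, mul_one] at key
    rw [ENNReal.ofReal_rpow_of_nonneg (by positivity) (by linarith),
      ENNReal.ofReal_rpow_of_nonneg (by positivity) hl0.le, ← ENNReal.ofReal_mul (by positivity),
      ENNReal.ofReal_le_ofReal_iff (by positivity), Real.div_rpow hV (by positivity),
      Real.div_rpow hI (by positivity), div_mul_div_comm, ← Real.rpow_add (by positivity)] at key
    rw [show 1 - l + l = 1 by ring, Real.rpow_one] at key
    exact (div_le_div_iff_of_pos_right (by positivity)).1 key
  · intro a ha b hb
    obtain ⟨y1, r, hr, hr1, rfl⟩ := Phi_Om_mem hK ha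
    obtain ⟨y2, s, hs, hs1, rfl⟩ := Phi_Om_mem hK hb
    by_cases h0 : (1 - l) • r • Xg K y1 + l • s • Xg K y2 = 0
    · right; exact h0
    left
    obtain ⟨x, t, ht, e⟩ := exists_ray hK h0
    rw [e]
    refine mem_Phi_Om hK ht ?_
    have h1 := congrArg (fun p => ⟪(x : Eu n), p⟫_ℝ) e
    simp only [inner_add_right, real_inner_smul_right, inner_grad hK (sph_ne x)] at h1
    have h2 := inner_grad_le hK (sph_ne y1) x
    have h3 := H x y2
    rw [real_inner_comm] at h3
    have hh := hK.pos x
    have h4 : r * ⟪(x : Eu n), Xg K y1⟫_ℝ < sfn K x := by nlinarith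
    have h5 : s * ⟪(x : Eu n), Xg K y2⟫_ℝ ≤ Λ x := by
      rcases le_or_gt ⟪(x : Eu n), Xg K y2⟫_ℝ 0 with h | h
      · have := hΛp x
        nlinarith
      · nlinarith
    have h6 : t * sfn K x < (1 - l) * sfn K x + l * Λ x := by
      rw [← h1]
      nlinarith
    rw [hσ]
    have : 1 - l + l * (Λ x / sfn K x) = ((1 - l) * sfn K x + l * Λ x) / sfn K x := by
      field_simp
    simp only [this]
    rwa [lt_div_iff₀ hh]

theorem bm_linear (hK : IsSmoothConvexBody K) (hpos : ∀ x : Sph n, 0 < dens K x) {ρ Λ : Sph n → ℝ} (hρ : Continuous ρ)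
    (hρp : ∀ x, 0 < ρ x) (hΛ : Continuous Λ) (hΛp : ∀ x, 0 < Λ x)
    (H : ∀ x y : Sph n, ρ y * ⟪Xg K y, (x : Eu n)⟫_ℝ ≤ Λ x) :
    (∫ x : Sph n, dens K x ∂sphMeas n) *
      Real.log ((∫ x : Sph n, dens K x * ρ x ^ (n + 1) ∂sphMeas n) /
        ∫ x : Sph n, dens K x ∂sphMeas n) ≤
      (n + 1) * ∫ x : Sph n, dens K x * (Λ x / sfn K x - 1) ∂sphMeas n := by
  set V := ∫ x : Sph n, dens K x ∂sphMeas n with hV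
  set I := ∫ x : Sph n, dens K x * ρ x ^ (n + 1) ∂sphMeas n with hI
  set u : Sph n → ℝ := fun x => Λ x / sfn K x - 1 with hu
  have huc : Continuous u := by
    have : Continuous fun x : Sph n => Λ x / sfn K x :=
      hΛ.div (sfn_contS hK) fun y => (hK.pos y).ne'
    fun_prop
  have hdc := dens_contS hK
  have hposint : ∀ f : Sph n → ℝ, Continuous f → (∀ x, 0 < f x) → 0 < ∫ x, f x ∂sphMeas n := by
    intro f hf h
    rw [integral_pos_iff_support_of_nonneg (fun x => (h x).le) (contS_integrable hf)]
    have : Function.support f = Set.univ := by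
      ext x; simp [(h x).ne']
    rw [this]
    exact (Measure.measure_univ_pos).2 (NeZero.ne _)
  have hV0 : 0 < V := hposint _ hdc hpos
  have hI0 : 0 < I := hposint _ (by fun_prop) fun x => by
    have := hpos x
    have := hρp x
    positivity
  obtain ⟨x0, -, hx0⟩ := (isCompact_univ (X := Sph n)).exists_isMaxOn Set.univ_nonempty
    huc.abs.continuousOn
  set B := |u x0| + 1 with hB
  have hB1 : 1 ≤ B := by have := abs_nonneg (u x0); linarith
  have hub : ∀ x, |u x| ≤ B := fun x => by
    have : |u x| ≤ |u x0| := hx0 (Set.mem_univ x)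
    linarith
  have hum : ∀ x, -1 < u x := fun x => by
    have := div_pos (hΛp x) (hK.pos x)
    simp only [hu]; linarith
  set m : ℝ := n + 1 with hm
  have hm1 : 1 ≤ m := by simp [hm]
  set Q := ∫ x : Sph n, dens K x * u x ∂sphMeas n with hQ
  have main : ∀ l : ℝ, 0 < l → l < 1 → l * (m * B) ≤ 1 →
      V * Real.log (I / V) ≤ m * Q + l * (m ^ 2 * B ^ 2 * V) := by
    intro l hl0 hl1 hl2
    have h1 := bm_step hK hpos hρ hρp hΛ hΛp H hl0 hl1
    have h2 : V * (1 + l * Real.log (I / V)) ≤ V ^ (1 - l) * I ^ l := by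
      have : V ^ (1 - l) * I ^ l = V * Real.exp (l * Real.log (I / V)) := by
        rw [Real.rpow_sub hV0, Real.rpow_one, Real.rpow_def_of_pos hI0, Real.rpow_def_of_pos hV0,
          Real.log_div hI0.ne' hV0.ne', div_mul_eq_mul_div, mul_div_assoc, ← Real.exp_sub]
        congr 2; ring
      rw [this]
      have := Real.add_one_le_exp (l * Real.log (I / V))
      gcongr
      linarith
    have h3 : ∫ x : Sph n, dens K x * (1 - l + l * (Λ x / sfn K x)) ^ (n + 1) ∂sphMeas n ≤
        ∫ x : Sph n, (dens K x + (l * m) * (dens K x * u x) + (l ^ 2 * m ^ 2 * B ^ 2) * dens K x)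
          ∂sphMeas n := by
      have c1 : Continuous fun x : Sph n => dens K x * (1 - l + l * (Λ x / sfn K x)) ^ (n + 1) := by
        have : Continuous fun x : Sph n => Λ x / sfn K x :=
          hΛ.div (sfn_contS hK) fun y => (hK.pos y).ne'
        fun_prop
      refine integral_mono (contS_integrable c1) (contS_integrable (by fun_prop)) fun x => ?_
      have e1 : 1 - l + l * (Λ x / sfn K x) = 1 + l * u x := by simp only [hu]; ring
      have hux := hum x
      have e2 : (1 + l * u x) ^ (n + 1) ≤ Real.exp (m * (l * u x)) := by
        have : Real.exp (m * (l * u x)) = Real.exp (l * u x) ^ (n + 1) := by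
          rw [← Real.exp_nat_mul]; simp [hm]
        rw [this]
        have h4 := Real.add_one_le_exp (l * u x)
        have h5 : 0 ≤ 1 + l * u x := by nlinarith
        gcongr
        linarith
      have hau : |m * (l * u x)| ≤ l * (m * B) := by
        rw [abs_mul, abs_mul, abs_of_pos hl0, abs_of_pos (by linarith : 0 < m)]
        have := hub x
        calc m * (l * |u x|) ≤ m * (l * B) := by gcongr
          _ = _ := by ring
      have e3 := Real.abs_exp_sub_one_sub_id_le (hau.trans hl2)
      have e4 : (m * (l * u x)) ^ 2 ≤ l ^ 2 * m ^ 2 * B ^ 2 := by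
        rw [← sq_abs]
        calc |m * (l * u x)| ^ 2 ≤ (l * (m * B)) ^ 2 := by gcongr
          _ = _ := by ring
      have e5 := (abs_le.1 e3).2
      have := hpos x
      simp only [e1]
      calc dens K x * (1 + l * u x) ^ (n + 1) ≤ dens K x *
            (1 + m * (l * u x) + l ^ 2 * m ^ 2 * B ^ 2) := by
            gcongr
            linarith
        _ = _ := by ring
    have h4 : ∫ x : Sph n, (dens K x + (l * m) * (dens K x * u x) +
        (l ^ 2 * m ^ 2 * B ^ 2) * dens K x) ∂sphMeas n = V + l * m * Q +
          l ^ 2 * m ^ 2 * B ^ 2 * V := by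
      rw [integral_add (contS_integrable (by fun_prop)) (contS_integrable (by fun_prop)),
        integral_add (contS_integrable (by fun_prop)) (contS_integrable (by fun_prop)),
        integral_const_mul, integral_const_mul]
    have h5 : l * (V * Real.log (I / V)) ≤ l * (m * Q + l * (m ^ 2 * B ^ 2 * V)) := by
      have := h2.trans (h1.trans (h3.trans h4.le))
      nlinarith
    exact le_of_mul_le_mul_left h5 hl0
  refine le_of_forall_pos_le_add fun e he => ?_
  set C := m ^ 2 * B ^ 2 * V with hC
  have hC0 : 0 < C := by positivity
  set l := min (1 / 2) (min (1 / (m * B)) (e / C)) with hl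
  have hmB : 0 < m * B := by positivity
  have hl0 : 0 < l := by
    refine lt_min (by norm_num) (lt_min (by positivity) (by positivity))
  have hl1 : l ≤ 1 / 2 := min_le_left _ _
  have hl2 : l ≤ 1 / (m * B) := (min_le_right _ _).trans (min_le_left _ _)
  have hl3 : l ≤ e / C := (min_le_right _ _).trans (min_le_right _ _)
  have := main l hl0 (by linarith) ((le_div_iff₀ hmB).1 hl2)
  have h6 := (le_div_iff₀ hC0).1 hl3
  linarith
end


/-! ### The spectral inequality -/

theorem inv_pow_lower (m : ℕ) : ∃ C : ℝ, 0 ≤ C ∧ ∀ u : ℝ, |u| ≤ 1 / 2 →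
    1 + m * u + m * (m + 1) / 2 * u ^ 2 - C * |u| ^ 3 ≤ ((1 - u)⁻¹) ^ m := by
  induction m with
  | zero => exact ⟨0, le_rfl, fun u _ => by simp⟩
  | succ m ih =>
    obtain ⟨C, hC, h⟩ := ih
    refine ⟨2 * (C + (m + 1) * (m + 2) / 2), by positivity, fun u hu => ?_⟩
    have h1 := h u hu
    have hu2 := abs_le.1 hu
    have h2 : 0 < 1 - u := by linarith [hu2.2]
    rw [pow_succ (1 - u)⁻¹ m, ← div_eq_mul_inv, le_div_iff₀ h2]
    refine le_trans ?_ h1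
    have h3 : u ^ 3 ≤ |u| ^ 3 := by rw [← abs_pow]; exact le_abs_self _
    have h3' : -|u| ^ 3 ≤ u ^ 3 := by rw [← abs_pow]; exact neg_abs_le _
    have h4 : 0 ≤ |u| ^ 3 := by positivity
    push_cast
    set q := |u| ^ 3
    set D : ℝ := (m + 1) * (m + 2) / 2 with hD
    have hD0 : 0 ≤ D := by positivity
    have e : (1 + (m + 1 : ℝ) * u + (m + 1) * (m + 1 + 1) / 2 * u ^ 2 - 2 * (C + D) * q) * (1 - u) =
        1 + m * u + m * (m + 1) / 2 * u ^ 2 - D * u ^ 3 - 2 * (1 - u) * (C + D) * q := by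
      rw [hD]; ring
    rw [e]
    have h5 : (C + D) * q ≤ 2 * (1 - u) * (C + D) * q := by
      have : 0 ≤ (C + D) * q := by positivity
      nlinarith [hu2.2]
    nlinarith

theorem cond_alg {h f a η t B L G c : ℝ} (tp : 0 < t) (hB0 : 1 ≤ B) (hη : 0 < η)
    (l5 : t * (10 * B ^ 5) ≤ η) (bh : |h| ≤ B) (bf : |f| ≤ B) (bA : |a| ≤ B) (bG : |G| ≤ B)
    (hGx : G = h * f ^ 2 + 1 / 2 * h ^ 2 * a + η) (hLx : L = h + t * (h * f) + t ^ 2 * G)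
    (hd : |L - h| ≤ t * (2 * B ^ 2)) (hL0 : 0 < L) (hL3 : L ≤ 3 * B ^ 2) :
    h + t * L * (f + c) + 1 / 2 * (t * L * (t * L * a)) + η / (18 * B ^ 4) * (t * L) ^ 2 ≤
      L * (1 + t * c) := by
  have hx := abs_le.1 bh
  have hBB : B ≤ B ^ 2 := by nlinarith
  have k1 : t * (G * f) ≤ t * B ^ 5 := by
    have : G * f ≤ B * B := (le_abs_self _).trans (by
      rw [abs_mul]; gcongr)
    have h5 : B * B ≤ B ^ 5 := by
      have : B ^ 2 ≤ B ^ 5 := pow_le_pow_right₀ hB0 (by norm_num)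
      linarith
    gcongr
    linarith
  have k2 : 1 / 2 * (L ^ 2 - h ^ 2) * a ≤ t * (4 * B ^ 5) := by
    have e1 : |L + h| ≤ 4 * B ^ 2 := by
      rw [abs_le]; constructor
      · linarith [hx.1]
      · linarith [hx.2]
    have : |1 / 2 * ((L - h) * (L + h)) * a| ≤ 1 / 2 * ((t * (2 * B ^ 2)) * (4 * B ^ 2)) * B := by
      rw [abs_mul, abs_mul, abs_mul, abs_of_pos (by norm_num : (0:ℝ) < 1 / 2)]
      gcongr
    calc _ = 1 / 2 * ((L - h) * (L + h)) * a := by ring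
      _ ≤ _ := (le_abs_self _).trans this
      _ = _ := by ring
  have k3 : η / (18 * B ^ 4) * L ^ 2 ≤ η / 2 := by
    calc η / (18 * B ^ 4) * L ^ 2 ≤ η / (18 * B ^ 4) * (3 * B ^ 2) ^ 2 := by gcongr
      _ = η / 2 := by field_simp; norm_num
  have k4 : t * (G * f) + 1 / 2 * (L ^ 2 - h ^ 2) * a + η / (18 * B ^ 4) * L ^ 2 ≤ η := by
    linarith
  have k5 := mul_le_mul_of_nonneg_left k4 (sq_nonneg t)
  generalize η / (18 * B ^ 4) = κ at *
  have e1 : t * L * f = t * (h * f) + t ^ 2 * (h * f ^ 2) + t ^ 2 * (t * (G * f)) := by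
    rw [hLx]; ring
  have e2 : L = h + t * (h * f) + t ^ 2 * (h * f ^ 2 + 1 / 2 * h ^ 2 * a + η) := by
    rw [← hGx]; exact hLx
  have e5 : L * (1 + t * c) = L + t * L * c := by ring
  have e6 : t * L * (f + c) = t * L * f + t * L * c := by ring
  rw [e5, e6, e1]
  generalize hw : t * L * c = w
  have e7 : L + w = h + t * (h * f) + t ^ 2 * (h * f ^ 2 + 1 / 2 * h ^ 2 * a + η) + w := by
    rw [← e2]
  rw [e7]
  clear e7 e2 e1 e5 e6 hLx hGx
  linarith [k5]

section
variable {n : ℕ} {K : Set (Eu n)}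

theorem taylor2 (hK : IsSmoothConvexBody K) {η : ℝ} (hη : 0 < η) : ∃ δ : ℝ, 0 < δ ∧ ∀ x : Sph n, ∀ w : Eu n, ‖w‖ ≤ δ →
    sfn K (x + w) ≤ sfn K x + ⟪Xg K x, w⟫_ℝ + 1 / 2 * ⟪hessA K x w, w⟫_ℝ + η * ‖w‖ ^ 2 := by
  have huc := (isCompact_sphere (0 : Eu n) 1).uniformContinuousAt_of_continuousAt
    (f := hessA K) (fun z hz => hess_cont hK (sph_ne ⟨z, hz⟩)) (Metric.dist_mem_uniformity hη)
  obtain ⟨δ, hδ, hd⟩ := Metric.mem_uniformity_dist.1 huc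
  refine ⟨min (δ / 2) (1 / 2), by positivity, fun x w hw => ?_⟩
  have hw1 : ‖w‖ ≤ δ / 2 := hw.trans (min_le_left _ _)
  have hw2 : ‖w‖ ≤ 1 / 2 := hw.trans (min_le_right _ _)
  set r := min (δ / 2) (1 / 2) with hr
  have hr0 : 0 < r := by positivity
  have hA : ∀ y ∈ closedBall (x : Eu n) r, ‖hessA K y - hessA K x‖ ≤ η := by
    intro y hy
    have h1 : dist (x : Eu n) y < δ := by
      rw [dist_comm]
      have : r ≤ δ / 2 := min_le_left _ _
      exact lt_of_le_of_lt (mem_closedBall.1 hy) (by linarith)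
    have h2 := hd h1 x.2
    rw [← dist_eq_norm, dist_comm]
    exact (show dist _ _ < η from h2).le
  have hne : ∀ y ∈ closedBall (x : Eu n) r, y ≠ 0 := by
    rintro y hy rfl
    have h1 := mem_closedBall.1 hy
    rw [dist_zero_left, sph_norm] at h1
    have : r ≤ 1 / 2 := min_le_right _ _
    linarith
  have hX : ∀ y ∈ closedBall (x : Eu n) r, ‖Xg K y - Xg K x - hessA K x (y - x)‖ ≤ η * ‖y - x‖ := by
    intro y hy
    exact (convex_closedBall _ _).norm_image_sub_le_of_norm_hasFDerivWithin_le'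
      (fun z hz => (grad_hasFDeriv hK (hne z hz)).hasFDerivWithinAt) hA
      (mem_closedBall_self hr0.le) hy
  have hmem : ∀ s ∈ Set.Icc (0:ℝ) 1, (x : Eu n) + s • w ∈ closedBall (x : Eu n) r := by
    intro s hs
    rw [mem_closedBall, dist_eq_norm, add_sub_cancel_left, norm_smul, Real.norm_of_nonneg hs.1]
    calc s * ‖w‖ ≤ 1 * ‖w‖ := by gcongr; exact hs.2
      _ ≤ r := by rw [one_mul]; exact hw
  set q : ℝ → ℝ := fun s => s * ⟪Xg K x, w⟫_ℝ + 1 / 2 * s ^ 2 * ⟪hessA K x w, w⟫_ℝ +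
    s ^ 2 * (η * ‖w‖ ^ 2) - sfn K (x + s • w) with hq
  have hderiv : ∀ s ∈ Set.Icc (0:ℝ) 1, HasDerivAt q (⟪Xg K x, w⟫_ℝ + s * ⟪hessA K x w, w⟫_ℝ +
      2 * s * (η * ‖w‖ ^ 2) - ⟪Xg K (x + s • w), w⟫_ℝ) s := by
    intro s hs
    have hc : HasDerivAt (fun s : ℝ => (x : Eu n) + s • w) w s := by
      simpa using ((hasDerivAt_id s).smul_const w).const_add (x : Eu n)
    have h1 := (sfn_hasGrad hK (hne _ (hmem s hs))).hasFDerivAt.comp_hasDerivAt s hc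
    have h2 := (((hasDerivAt_id s).mul_const ⟪Xg K x, w⟫_ℝ).add
      ((((hasDerivAt_pow 2 s).const_mul (1/2 : ℝ)).mul_const ⟪hessA K x w, w⟫_ℝ))).add
      ((hasDerivAt_pow 2 s).mul_const (η * ‖w‖ ^ 2))
    have h3 := h2.sub h1
    refine h3.congr_deriv ?_
    simp
  have hmono : MonotoneOn q (Set.Icc 0 1) := by
    refine monotoneOn_of_deriv_nonneg (convex_Icc 0 1)
      (fun s hs => (hderiv s hs).continuousAt.continuousWithinAt)
      (fun s hs => (hderiv s (interior_subset hs)).differentiableAt.differentiableWithinAt)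
      fun s hs => ?_
    have hs := interior_subset hs
    rw [(hderiv s hs).deriv]
    have h1 := hX _ (hmem s hs)
    rw [add_sub_cancel_left] at h1
    have h2 := (abs_le.1 ((abs_real_inner_le_norm
      (Xg K (x + s • w) - Xg K x - hessA K x (s • w)) w).trans
        (mul_le_mul_of_nonneg_right h1 (norm_nonneg _)))).2
    simp only [inner_sub_left, map_smul, real_inner_smul_left, norm_smul,
      Real.norm_of_nonneg hs.1] at h2
    have h3 : 0 ≤ s * (η * ‖w‖ ^ 2) := mul_nonneg hs.1 (by positivity)
    nlinarith
  have := hmono (by simp) (by simp) zero_le_one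
  simp only [hq] at this
  simp at this
  linarith

theorem sfn_scale_le (hK : IsSmoothConvexBody K) {x y : Sph n} {L c : ℝ} {e : Eu n} {t : ℝ}
    (h : sfn K (x + (t * L) • e) ≤ L * (1 + t * c)) :
    ⟪Xg K y, (x : Eu n)⟫_ℝ ≤ L * (1 - t * (⟪e, Xg K y⟫_ℝ - c)) := by
  have h1 := inner_grad_le hK (sph_ne y) (x + (t * L) • e)
  rw [inner_add_left, real_inner_smul_left, real_inner_comm] at h1
  nlinarith

theorem contS_bound {f : Sph n → ℝ} (hf : Continuous f) : ∃ B : ℝ, 1 ≤ B ∧ ∀ x, |f x| ≤ B := by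
  obtain ⟨x0, -, hx0⟩ := (isCompact_univ (X := Sph n)).exists_isMaxOn Set.univ_nonempty
    hf.abs.continuousOn
  refine ⟨|f x0| + 1, by have := abs_nonneg (f x0); linarith, fun x => ?_⟩
  have : |f x| ≤ |f x0| := hx0 (Set.mem_univ x)
  linarith

set_option maxHeartbeats 1000000 in
theorem spectral_cond (hK : IsSmoothConvexBody K) {e : Eu n} (he : ‖e‖ = 1) (c : ℝ) {f : Sph n → ℝ}
    (hf : f = fun x : Sph n => ⟪e, Xg K x⟫_ℝ - c) {η : ℝ} (hη : 0 < η) {Λ : ℝ → Sph n → ℝ}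
    (hΛ : Λ = fun (t : ℝ) (x : Sph n) => sfn K x + t * (sfn K x * f x) + t ^ 2 * (sfn K x * f x ^ 2 +
      1 / 2 * sfn K x ^ 2 * ⟪hessA K x e, e⟫_ℝ + η)) :
    ∃ t0 > 0, ∀ t, 0 < t → t < t0 → (∀ x, |t * f x| ≤ 1 / 2) ∧ (∀ x, 0 < Λ t x) ∧
      ∀ x y : Sph n, (1 - t * f y)⁻¹ * ⟪Xg K y, (x : Eu n)⟫_ℝ ≤ Λ t x := by
  have hgc := grad_contS hK
  have hsc := sfn_contS hK
  have hhc := hess_contS hK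
  have hfc : Continuous f := by rw [hf]; fun_prop
  have hAc : Continuous fun x : Sph n => ⟪hessA K x e, e⟫_ℝ := by fun_prop
  set G : Sph n → ℝ := fun x => sfn K x * f x ^ 2 +
      1 / 2 * sfn K x ^ 2 * ⟪hessA K x e, e⟫_ℝ + η with hG
  have hGc : Continuous G := by fun_prop
  obtain ⟨B1, b1, hB1⟩ := contS_bound hsc
  obtain ⟨B2, b2, hB2⟩ := contS_bound hfc
  obtain ⟨B3, b3, hB3⟩ := contS_bound hAc
  obtain ⟨B4, b4, hB4⟩ := contS_bound hGc
  obtain ⟨x0, -, hx0⟩ := (isCompact_univ (X := Sph n)).exists_isMinOn Set.univ_nonempty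
    hsc.continuousOn
  have hx0' : ∀ x : Sph n, sfn K x0 ≤ sfn K x := fun x => hx0 (Set.mem_univ x)
  have hm0 := hK.pos x0
  set μ := sfn K x0
  set B := B1 + B2 + B3 + B4 with hB
  have hB0 : 1 ≤ B := by linarith
  obtain ⟨δ, hδ, hT⟩ := taylor2 hK (η := η / (18 * B ^ 4)) (by positivity)
  set t0 := min 1 (min (1 / (2 * B)) (min (μ / (4 * B ^ 2)) (min (δ / (3 * B ^ 2)) (η / (10 * B ^ 5)))))
    with ht0
  refine ⟨t0, by positivity, fun t tp tl => ?_⟩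
  have l1 : t ≤ 1 := tl.le.trans (min_le_left _ _)
  have tl := tl.le.trans (min_le_right _ _)
  have l2 := (le_div_iff₀ (by positivity)).1 (tl.trans (min_le_left _ _))
  have tl := tl.trans (min_le_right _ _)
  have l3 := (le_div_iff₀ (by positivity)).1 (tl.trans (min_le_left _ _))
  have tl := tl.trans (min_le_right _ _)
  have l4 := (le_div_iff₀ (by positivity)).1 (tl.trans (min_le_left _ _))
  have l5 := (le_div_iff₀ (by positivity)).1 (tl.trans (min_le_right _ _))
  have bh : ∀ x : Sph n, |sfn K x| ≤ B := fun x => (hB1 x).trans (by linarith)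
  have bf : ∀ x : Sph n, |f x| ≤ B := fun x => (hB2 x).trans (by linarith)
  have bA : ∀ x : Sph n, |⟪hessA K x e, e⟫_ℝ| ≤ B := fun x => (hB3 x).trans (by linarith)
  have bG : ∀ x : Sph n, |G x| ≤ B := fun x => (hB4 x).trans (by linarith)
  have hΛ' : ∀ x, Λ t x = sfn K x + t * (sfn K x * f x) + t ^ 2 * G x := by
    intro x; rw [hΛ]
  have c1 : ∀ x, |t * f x| ≤ 1 / 2 := fun x => by
    rw [abs_mul, abs_of_pos tp]
    have : t * |f x| ≤ t * B := by gcongr; exact bf x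
    linarith
  have hd : ∀ x, |Λ t x - sfn K x| ≤ t * (2 * B ^ 2) := by
    intro x
    rw [hΛ']
    have e1 : |t * (sfn K x * f x)| ≤ t * (B * B) := by
      rw [abs_mul, abs_mul, abs_of_pos tp]
      gcongr
      · exact bh x
      · exact bf x
    have e2 : |t ^ 2 * G x| ≤ t * (B ^ 2) := by
      rw [abs_mul, abs_of_pos (by positivity)]
      have h1 := bG x
      have h2 : t ^ 2 ≤ t := pow_le_of_le_one tp.le l1 (by norm_num)
      have h3 : B ≤ B ^ 2 := le_self_pow₀ hB0 (by norm_num)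
      calc t ^ 2 * |G x| ≤ t * B := by gcongr
        _ ≤ _ := by gcongr
    calc _ = |t * (sfn K x * f x) + t ^ 2 * G x| := by congr 1; ring
      _ ≤ _ := abs_add_le _ _
      _ ≤ _ := add_le_add e1 e2
      _ = _ := by ring
  have c2 : ∀ x, 0 < Λ t x := by
    intro x
    have h1 := (abs_le.1 (hd x)).1
    have h2 := hx0' x
    linarith
  refine ⟨c1, c2, fun x y => ?_⟩
  have hy := abs_le.1 (c1 y)
  have h1 : 0 < 1 - t * f y := by linarith [hy.2]
  rw [inv_mul_le_iff₀ h1, mul_comm]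
  have h2 : sfn K (x + (t * Λ t x) • e) ≤ Λ t x * (1 + t * c) := by
    have hL0 : 0 < Λ t x := c2 x
    have hL3 : Λ t x ≤ 3 * B ^ 2 := by
      have hBB : B ≤ B ^ 2 := le_self_pow₀ hB0 (by norm_num)
      have tB : t * (2 * B ^ 2) ≤ 1 * (2 * B ^ 2) := by gcongr
      linarith [(abs_le.1 (hd x)).2, (abs_le.1 (bh x)).2]
    have hw : ‖(t * Λ t x) • e‖ = t * Λ t x := by
      rw [norm_smul, he, mul_one, Real.norm_of_nonneg (by positivity)]
    have h3 := hT x ((t * Λ t x) • e) (by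
      rw [hw]
      calc t * Λ t x ≤ t * (3 * B ^ 2) := by gcongr
        _ ≤ δ := l4)
    rw [hw, real_inner_smul_right, map_smul, real_inner_smul_left, real_inner_smul_right] at h3
    refine h3.trans ?_
    have hfx : ⟪Xg K x, e⟫_ℝ = f x + c := by rw [hf, real_inner_comm]; ring
    rw [hfx]
    exact cond_alg tp hB0 hη l5 (bh x) (bf x) (bA x) (bG x) rfl (hΛ' x) (hd x) hL0 hL3
  have h3 := sfn_scale_le hK (y := y) h2
  rw [hf]
  exact h3

theorem hposint (hK : IsSmoothConvexBody K) {f : Sph n → ℝ} (hf : Continuous f) (h : ∀ x, 0 < f x) :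
    0 < ∫ x, f x ∂sphMeas n := by
  rw [integral_pos_iff_support_of_nonneg (fun x => (h x).le) (contS_integrable hf)]
  have : Function.support f = Set.univ := by
    ext x; simp [(h x).ne']
  rw [this]
  exact (Measure.measure_univ_pos).2 (NeZero.ne _)

theorem spectral (hK : IsSmoothConvexBody K) (hpos : ∀ x : Sph n, 0 < dens K x) {e : Eu n} (he : ‖e‖ = 1) :
    ∃ c : ℝ, n * ∫ x : Sph n, dens K x * (⟪e, Xg K x⟫_ℝ - c) ^ 2 ∂sphMeas n ≤
      ∫ x : Sph n, dens K x * (sfn K x * ⟪hessA K x e, e⟫_ℝ) ∂sphMeas n := by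
  have hgc := grad_contS hK
  have hsc := sfn_contS hK
  have hhc := hess_contS hK
  have hdc := dens_contS hK
  have hAc : Continuous fun x : Sph n => ⟪hessA K x e, e⟫_ℝ := by fun_prop
  set V := ∫ x : Sph n, dens K x ∂sphMeas n with hV
  have hV0 : 0 < V := hposint hK hdc hpos
  set c := (∫ x : Sph n, dens K x * ⟪e, Xg K x⟫_ℝ ∂sphMeas n) / V with hc
  set f : Sph n → ℝ := fun x => ⟪e, Xg K x⟫_ℝ - c with hf
  have hfc : Continuous f := by fun_prop
  refine ⟨c, ?_⟩
  have hf0 : ∫ x : Sph n, dens K x * f x ∂sphMeas n = 0 := by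
    have : (fun x : Sph n => dens K x * f x) =
        fun x : Sph n => dens K x * ⟪e, Xg K x⟫_ℝ - c * dens K x := by
      funext x; simp only [hf]; ring
    rw [this, integral_sub (contS_integrable (by fun_prop)) (contS_integrable (by fun_prop)),
      integral_const_mul, hc, div_mul_cancel₀ _ hV0.ne', sub_self]
  set E2 := ∫ x : Sph n, dens K x * f x ^ 2 ∂sphMeas n with hE2
  set P := ∫ x : Sph n, dens K x * (sfn K x * ⟪hessA K x e, e⟫_ℝ) ∂sphMeas n with hP
  set D := ∫ x : Sph n, dens K x * (sfn K x)⁻¹ ∂sphMeas n with hD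
  have hinv : Continuous fun x : Sph n => (sfn K x)⁻¹ := hsc.inv₀ fun x => (hK.pos x).ne'
  set m : ℝ := n + 1 with hm
  have hm1 : 1 ≤ m := by simp [hm]
  obtain ⟨C, hC, hlow⟩ := inv_pow_lower (n + 1)
  obtain ⟨B, hB, hfB⟩ := contS_bound hfc
  set a := m * (m + 1) / 2 * E2 with ha
  set C' := C * B ^ 3 * V with hC'
  have main : ∀ η > 0, a ≤ m * (E2 + P / 2 + η * D) := by
    intro η hη
    obtain ⟨t0, ht0, hcond⟩ := spectral_cond hK he c hf hη rfl
    have ev : ∀ᶠ t in 𝓝[>] (0:ℝ), (a - C' * t) - 2 * t ^ 2 * (a - C' * t) ^ 2 / V ≤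
        m * (E2 + P / 2 + η * D) := by
      have ev1 : ∀ᶠ t in 𝓝[>] (0:ℝ), -(1/2) < t ^ 2 * (a - C' * t) / V := by
        have : Filter.Tendsto (fun t : ℝ => t ^ 2 * (a - C' * t) / V) (𝓝[>] 0)
            (𝓝 (0 ^ 2 * (a - C' * 0) / V)) := by
          apply Filter.Tendsto.mono_left _ nhdsWithin_le_nhds
          apply Continuous.tendsto (f := fun t : ℝ => t ^ 2 * (a - C' * t) / V)
          fun_prop
        refine this.eventually (lt_mem_nhds ?_)
        simp
      filter_upwards [ev1, Ioo_mem_nhdsGT ht0] with t hs ht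
      obtain ⟨k1, k2, k3⟩ := hcond t ht.1 ht.2
      have h1m : ∀ x, 0 < 1 - t * f x := fun x => by
        have := (abs_le.1 (k1 x)).2
        linarith
      have hρc : Continuous fun x => (1 - t * f x)⁻¹ :=
        Continuous.inv₀ (by fun_prop) fun x => (h1m x).ne'
      have bm := bm_linear hK hpos (ρ := fun x => (1 - t * f x)⁻¹) hρc
        (fun x => inv_pos.2 (h1m x)) (by fun_prop) k2 k3
      set I := ∫ x : Sph n, dens K x * ((1 - t * f x)⁻¹) ^ (n + 1) ∂sphMeas n with hI
      rw [← hV] at bm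
      -- right side
      have r1 : ∫ x : Sph n, dens K x * ((sfn K x + t * (sfn K x * f x) + t ^ 2 *
          (sfn K x * f x ^ 2 + 1 / 2 * sfn K x ^ 2 * ⟪hessA K x e, e⟫_ℝ + η)) / sfn K x - 1)
          ∂sphMeas n = t ^ 2 * (E2 + P / 2 + η * D) := by
        have e1 : ∀ x : Sph n, dens K x * ((sfn K x + t * (sfn K x * f x) + t ^ 2 *
          (sfn K x * f x ^ 2 + 1 / 2 * sfn K x ^ 2 * ⟪hessA K x e, e⟫_ℝ + η)) / sfn K x - 1) =
            t * (dens K x * f x) + (t ^ 2 * (dens K x * f x ^ 2) +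
            (t ^ 2 / 2 * (dens K x * (sfn K x * ⟪hessA K x e, e⟫_ℝ)) +
              (t ^ 2 * η) * (dens K x * (sfn K x)⁻¹))) := by
          intro x
          have := (hK.pos x).ne'
          field_simp
          ring
        simp only [e1]
        rw [integral_add (contS_integrable (by fun_prop)) (contS_integrable (by fun_prop)),
          integral_add (contS_integrable (by fun_prop)) (contS_integrable (by fun_prop)),
          integral_add (contS_integrable (by fun_prop)) (contS_integrable (by fun_prop)),
          integral_const_mul, integral_const_mul, integral_const_mul, integral_const_mul, hf0]
        ring
      rw [r1] at bm
      -- left side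
      have l1 : V + t ^ 2 * (a - C' * t) ≤ I := by
        have e1 : V + t ^ 2 * (a - C' * t) = ∫ x : Sph n, (dens K x + ((m * t) * (dens K x * f x) +
            ((m * (m + 1) / 2 * t ^ 2) * (dens K x * f x ^ 2) - (C * B ^ 3 * t ^ 3) * dens K x)))
            ∂sphMeas n := by
          rw [integral_add (contS_integrable (by fun_prop)) (contS_integrable (by fun_prop)),
            integral_add (contS_integrable (by fun_prop)) (contS_integrable (by fun_prop)),
            integral_sub (contS_integrable (by fun_prop)) (contS_integrable (by fun_prop)),
            integral_const_mul, integral_const_mul, integral_const_mul, hf0, ha, hC']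
          ring
        rw [e1, hI]
        refine integral_mono (contS_integrable (by fun_prop)) (contS_integrable (by fun_prop))
          fun x => ?_
        have h2 := hlow (t * f x) (k1 x)
        have h3 : |t * f x| ^ 3 ≤ t ^ 3 * B ^ 3 := by
          rw [abs_mul, abs_of_pos ht.1, mul_pow]
          have := ht.1
          gcongr
          exact hfB x
        have h4 := mul_le_mul_of_nonneg_left h3 hC
        have h5 : 1 + m * (t * f x) + m * (m + 1) / 2 * (t * f x) ^ 2 - C * (t ^ 3 * B ^ 3) ≤
            ((1 - t * f x)⁻¹) ^ (n + 1) := by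
          push_cast at h2
          rw [hm]
          linarith
        have := mul_le_mul_of_nonneg_left h5 (hpos x).le
        simp only
        calc _ = _ := ?_
          _ ≤ _ := this
        ring
      set s := t ^ 2 * (a - C' * t) / V with hs'
      have l2 : V * (1 + s) ≤ I := by
        have : V * (1 + s) = V + t ^ 2 * (a - C' * t) := by rw [hs']; field_simp
        rw [this]; exact l1
      have hs1 : 0 < 1 + s := by linarith
      have l3 : 1 + s ≤ I / V := by rw [le_div_iff₀ hV0]; linarith
      have l4 : s - 2 * s ^ 2 ≤ Real.log (I / V) := by
        have h1 := Real.log_le_log hs1 l3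
        have h2 := Real.one_sub_inv_le_log_of_pos hs1
        have h3 : s - 2 * s ^ 2 ≤ 1 - (1 + s)⁻¹ := by
          have : 1 - (1 + s)⁻¹ = s / (1 + s) := by field_simp; ring
          rw [this, le_div_iff₀ hs1]
          nlinarith [mul_nonneg (sq_nonneg s) (by linarith : 0 ≤ 1 + 2 * s)]
        linarith
      have l5 : V * (s - 2 * s ^ 2) ≤ m * (t ^ 2 * (E2 + P / 2 + η * D)) :=
        (mul_le_mul_of_nonneg_left l4 hV0.le).trans bm
      have t2 : 0 < t ^ 2 := by have := ht.1; positivity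
      have l6 : t ^ 2 * ((a - C' * t) - 2 * t ^ 2 * (a - C' * t) ^ 2 / V) ≤
          t ^ 2 * (m * (E2 + P / 2 + η * D)) := by
        have : t ^ 2 * ((a - C' * t) - 2 * t ^ 2 * (a - C' * t) ^ 2 / V) =
          V * (s - 2 * s ^ 2) := by rw [hs']; field_simp
        rw [this]; linarith
      exact le_of_mul_le_mul_left l6 t2
    refine le_of_tendsto (x := 𝓝[>] (0:ℝ)) (f := fun t : ℝ => (a - C' * t) - 2 * t ^ 2 * (a - C' * t) ^ 2 / V) ?_ ev
    have : Filter.Tendsto (fun t : ℝ => (a - C' * t) - 2 * t ^ 2 * (a - C' * t) ^ 2 / V) (𝓝[>] 0)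
        (𝓝 ((a - C' * 0) - 2 * 0 ^ 2 * (a - C' * 0) ^ 2 / V)) := by
      apply Filter.Tendsto.mono_left _ nhdsWithin_le_nhds
      apply Continuous.tendsto (f := fun t : ℝ => (a - C' * t) - 2 * t ^ 2 * (a - C' * t) ^ 2 / V)
      fun_prop
    simpa using this
  have hfin : a ≤ m * (E2 + P / 2) := by
    have : Filter.Tendsto (fun η : ℝ => m * (E2 + P / 2 + η * D)) (𝓝[>] 0)
        (𝓝 (m * (E2 + P / 2 + 0 * D))) := by
      apply Filter.Tendsto.mono_left _ nhdsWithin_le_nhds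
      apply Continuous.tendsto (f := fun η : ℝ => m * (E2 + P / 2 + η * D))
      fun_prop
    rw [zero_mul, add_zero] at this
    refine ge_of_tendsto this ?_
    filter_upwards [self_mem_nhdsWithin] with η hη
    exact main η hη
  have h1 : m * ((m + 1) / 2 * E2) ≤ m * (E2 + P / 2) := by rw [ha] at hfin; linarith
  have h2 := le_of_mul_le_mul_left h1 (by linarith)
  have h3 : (n : ℝ) = m - 1 := by simp [hm]
  rw [h3]
  linarith
end


/-! ### Integration by parts on the sphere -/

theorem int_polar_mul {n : ℕ} (f : Eu n → ℝ) (p : Sph n → ℝ) (q : ℝ → ℝ)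
    (h : ∀ x : Sph n, ∀ r : ℝ, 0 < r → f (r • (x : Eu n)) = p x * q r) :
    ∫ z, f z = (∫ x, p x ∂sphMeas n) * ∫ r : Set.Ioi (0:ℝ), q r ∂(Measure.volumeIoiPow n) := by
  have h0 : ∫ z, f z = ∫ z in ({0}ᶜ : Set (Eu n)), f z := by
    rw [restrict_compl_singleton]
  rw [h0, ← integral_subtype_comap (measurableSet_singleton _).compl]
  have h1 := (Measure.measurePreserving_homeomorphUnitSphereProd
    (volume : Measure (Eu n))).integral_comp (Homeomorph.measurableEmbedding _)
      (fun z : Sph n × Set.Ioi (0:ℝ) => p z.1 * q z.2)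
  have hd : Module.finrank ℝ (Eu n) - 1 = n := by simp
  rw [hd] at h1
  have h2 := integral_prod_mul (μ := (volume : Measure (Eu n)).toSphere)
    (ν := Measure.volumeIoiPow n) p (fun r : Set.Ioi (0:ℝ) => q r)
  rw [sphMeas, ← h2, ← h1]
  refine integral_congr_ae (Filter.Eventually.of_forall fun z => ?_)
  have := h (polH n z).1 (polH n z).2 (polH n z).2.2
  rw [← polH_eq] at this
  exact this

/-- a bump function -/
def bmp : ContDiffBump (3 / 2 : ℝ) := ⟨1 / 4, 1 / 2, by norm_num, by norm_num⟩

theorem bmp_zero {s : ℝ} (h : s < 1 ∨ 2 < s) : bmp s = 0 := by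
  apply bmp.zero_of_le_dist
  rw [Real.dist_eq]
  show (1 / 2 : ℝ) ≤ _
  rcases h with h | h
  · rw [abs_of_neg (by linarith)]; linarith
  · rw [abs_of_pos (by linarith)]; linarith

theorem dbmp_zero {s : ℝ} (h : s < 1 ∨ 2 < s) : deriv bmp s = 0 := by
  have : (bmp : ℝ → ℝ) =ᶠ[𝓝 s] fun _ => 0 := by
    rcases h with h | h
    · filter_upwards [gt_mem_nhds h] with y hy using bmp_zero (Or.inl hy)
    · filter_upwards [lt_mem_nhds h] with y hy using bmp_zero (Or.inr hy)
  rw [this.deriv_eq]; simp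

theorem dbmp_cont : Continuous (deriv bmp) :=
  (bmp.contDiff (n := 1)).continuous_deriv (by norm_num)

section
variable {n : ℕ}

theorem cut_zero {g : ℝ → ℝ} (hg0 : ∀ s, s < 1 ∨ 2 < s → g s = 0) (v : Eu n → ℝ) :
    (fun z : Eu n => g (‖z‖ ^ 2) * v z) =ᶠ[𝓝 0] fun _ => 0 := by
  filter_upwards [ball_mem_nhds (0 : Eu n) one_pos] with z hz
  have : ‖z‖ < 1 := by simpa using hz
  rw [hg0 _ (Or.inl (by nlinarith [norm_nonneg z])), zero_mul]

theorem cut_cont {g : ℝ → ℝ} (hg : Continuous g) (hg0 : ∀ s, s < 1 ∨ 2 < s → g s = 0)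
    {v : Eu n → ℝ} (hv : ∀ z, z ≠ 0 → ContinuousAt v z) :
    Continuous fun z : Eu n => g (‖z‖ ^ 2) * v z := by
  refine continuous_iff_continuousAt.2 fun z => ?_
  by_cases hz : z = 0
  · rw [hz]
    exact continuousAt_const.congr (cut_zero hg0 v).symm
  · exact ContinuousAt.mul (by fun_prop) (hv z hz)

theorem cut_supp {g : ℝ → ℝ} (hg0 : ∀ s, s < 1 ∨ 2 < s → g s = 0)
    (v : Eu n → ℝ) : HasCompactSupport fun z : Eu n => g (‖z‖ ^ 2) * v z := by
  refine HasCompactSupport.intro (isCompact_closedBall (0 : Eu n) 2) fun z hz => ?_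
  have : 2 < ‖z‖ := by simpa using hz
  rw [hg0 _ (Or.inr (by nlinarith)), zero_mul]

theorem cut_int {g : ℝ → ℝ} (hg : Continuous g) (hg0 : ∀ s, s < 1 ∨ 2 < s → g s = 0)
    {v : Eu n → ℝ} (hv : ∀ z, z ≠ 0 → ContinuousAt v z) :
    Integrable fun z : Eu n => g (‖z‖ ^ 2) * v z :=
  (cut_cont hg hg0 hv).integrable_of_hasCompactSupport (cut_supp hg0 v)

def Q1 (n : ℕ) : ℝ := ∫ r : Set.Ioi (0:ℝ), 2 * deriv bmp ((r:ℝ) ^ 2) * (r:ℝ) ^ 2 ∂(Measure.volumeIoiPow n)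
def Q2 (n : ℕ) : ℝ := ∫ r : Set.Ioi (0:ℝ), bmp ((r:ℝ) ^ 2) ∂(Measure.volumeIoiPow n)

theorem ibp_aux {w : Eu n → ℝ} {w' : Eu n → Eu n →L[ℝ] ℝ}
    (hd : ∀ z, z ≠ 0 → HasFDerivAt w (w' z) z) (hc : ∀ z, z ≠ 0 → ContinuousAt w' z)
    (hom : ∀ z, z ≠ 0 → ∀ r : ℝ, 0 < r → w (r • z) = r * w z) (e : Eu n) :
    (∫ x : Sph n, w x * ⟪(x : Eu n), e⟫_ℝ ∂sphMeas n) * Q1 n +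
      (∫ x : Sph n, w' x e ∂sphMeas n) * Q2 n = 0 := by
  have hom' : ∀ z, z ≠ 0 → ∀ r : ℝ, 0 < r → w' (r • z) = w' z := by
    intro z hz r hr
    have hrz : r • z ≠ 0 := smul_ne_zero hr.ne' hz
    have h1 : HasFDerivAt (fun y => w (r • y)) ((w' (r • z)).comp
        (r • ContinuousLinearMap.id ℝ (Eu n))) z :=
      (hd _ hrz).comp z ((hasFDerivAt_id z).const_smul r)
    have h2 : HasFDerivAt (fun y => w (r • y)) (r • w' z) z := by
      refine ((hd z hz).const_mul r).congr_of_eventuallyEq ?_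
      filter_upwards [isOpen_compl_singleton.mem_nhds hz] with y hy
      exact hom y hy r hr
    have h3 := h1.unique h2
    ext1 v
    have := congrArg (fun f => f v) h3
    simp at this
    rcases this with h | h
    · exact h
    · exact absurd h hr.ne'
  set F : Eu n → ℝ := fun z => bmp (‖z‖ ^ 2) * w z with hF
  set F' : Eu n → Eu n →L[ℝ] ℝ := fun z => bmp (‖z‖ ^ 2) • w' z +
    w z • ((deriv bmp (‖z‖ ^ 2)) • ((2:ℝ) • innerSL ℝ z)) with hF'
  have hFd : ∀ z, HasFDerivAt F (F' z) z := by
    intro z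
    by_cases hz : z = 0
    · have h1 : F' z = 0 := by
        rw [hz, hF']
        have a1 : (bmp : ℝ → ℝ) 0 = 0 := bmp_zero (Or.inl (by norm_num))
        have a2 : deriv bmp 0 = 0 := dbmp_zero (Or.inl (by norm_num))
        simp [a1, a2]
      rw [h1, hz]
      exact (hasFDerivAt_const (0:ℝ) (0 : Eu n)).congr_of_eventuallyEq
        (cut_zero (fun s h => bmp_zero h) w)
    · have h1 : HasFDerivAt (fun y : Eu n => bmp (‖y‖ ^ 2))
          ((deriv bmp (‖z‖ ^ 2)) • ((2:ℝ) • innerSL ℝ z)) z := by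
        have h2 : HasDerivAt bmp (deriv bmp (‖z‖ ^ 2)) (‖z‖ ^ 2) :=
          ((bmp.contDiff (n := 1)).differentiable (by norm_num) _).hasDerivAt
        have h3 := (hasStrictFDerivAt_norm_sq z).hasFDerivAt
        have h4 := h2.comp_hasFDerivAt z h3
        refine h4.congr_fderiv ?_
        ext v; simp
      exact h1.mul (hd z hz)
  have hwc : ∀ z, z ≠ 0 → ContinuousAt w z := fun z hz => (hd z hz).continuousAt
  have hwe : ∀ z, z ≠ 0 → ContinuousAt (fun z => w' z e) z := fun z hz =>
    (hc z hz).clm_apply continuousAt_const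
  have i1 := cut_int bmp.continuous (fun s h => bmp_zero h) hwe
  have i2 := cut_int dbmp_cont (fun s h => dbmp_zero h) (v := fun z => 2 * (w z * ⟪z, e⟫_ℝ))
    (fun z hz => by
      have := hwc z hz
      fun_prop)
  have i3 := cut_int bmp.continuous (fun s h => bmp_zero h) hwc
  have hFe : ∀ z, fderiv ℝ F z e = bmp (‖z‖ ^ 2) * w' z e +
      deriv bmp (‖z‖ ^ 2) * (2 * (w z * ⟪z, e⟫_ℝ)) := by
    intro z
    rw [(hFd z).fderiv, hF']
    simp
    ring
  have hz0 := integral_mul_fderiv_eq_neg_fderiv_mul_of_integrable (μ := (volume : Measure (Eu n)))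
    (f := fun _ : Eu n => (1:ℝ)) (g := F) (v := e) (by simp) (by
      simp only [one_mul, hFe]; exact i1.add i2) (by simpa only [one_mul] using i3)
      (by fun_prop) (fun z _ => (hFd z).differentiableAt)
  simp only [one_mul, hFe] at hz0
  rw [integral_add i1 i2] at hz0
  rw [int_polar_mul _ (fun x : Sph n => w' x e) (fun r => bmp (r ^ 2)),
    int_polar_mul _ (fun x : Sph n => w x * ⟪(x : Eu n), e⟫_ℝ)
      (fun r => 2 * deriv bmp (r ^ 2) * r ^ 2)] at hz0
  · rw [Q1, Q2, add_comm, hz0]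
    simp
  · intro x r hr
    rw [hom x (sph_ne x) r hr, real_inner_smul_left, norm_smul, sph_norm, Real.norm_of_nonneg hr.le]
    simp only [mul_one]
    ring
  · intro x r hr
    rw [hom' x (sph_ne x) r hr, norm_smul, sph_norm, Real.norm_of_nonneg hr.le]
    simp only [mul_one]
    ring

theorem Q2_pos : 0 < Q2 n := by
  have h := int_polar_mul (fun z : Eu n => bmp (‖z‖ ^ 2) * 1) (fun _ : Sph n => 1)
    (fun r => bmp (r ^ 2)) (by
      intro x r hr
      rw [norm_smul, sph_norm, Real.norm_of_nonneg hr.le]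
      simp)
  have hc : Continuous (fun z : Eu n => bmp (‖z‖ ^ 2) * 1) :=
    cut_cont bmp.continuous (fun s h => bmp_zero h) (fun z _ => continuousAt_const)
  have hpos : 0 < ∫ z : Eu n, bmp (‖z‖ ^ 2) * 1 := by
    refine hc.integral_pos_of_hasCompactSupport_nonneg_nonzero
      (cut_supp (fun s h => bmp_zero h) _) (fun z => ?_) (x := EuclideanSpace.single 0 (√(3/2))) ?_
    · simp only [mul_one]; exact bmp.nonneg
    · simp only [mul_one, EuclideanSpace.norm_single, norm_eq_abs, sq_abs]
      rw [Real.sq_sqrt (by norm_num)]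
      rw [bmp.one_of_mem_closedBall (by rw [mem_closedBall, dist_self]; exact bmp.rIn_pos.le)]
      norm_num
  rw [h] at hpos
  exact pos_of_mul_pos_right hpos (by positivity)

theorem Q1_eq : Q1 n = -(n + 1) * Q2 n := by
  have key : ∀ i : Fin (n + 1), (∫ x : Sph n, (x : Eu n) i * (x : Eu n) i ∂sphMeas n) * Q1 n +
      (∫ x : Sph n, (1:ℝ) ∂sphMeas n) * Q2 n = 0 := by
    intro i
    have := ibp_aux (n := n) (w := fun z => z i) (w' := fun _ => EuclideanSpace.proj i)
      (fun z _ => (EuclideanSpace.proj i : Eu n →L[ℝ] ℝ).hasFDerivAt) (fun z _ => continuousAt_const)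
      (fun z _ r _ => by simp) (EuclideanSpace.single i 1)
    simpa [EuclideanSpace.inner_single_right] using this
  have hs := Finset.sum_congr (rfl : (Finset.univ : Finset (Fin (n+1))) = Finset.univ)
    fun i _ => key i
  rw [Finset.sum_add_distrib, ← Finset.sum_mul, ← integral_finsetSum] at hs
  · have h1 : ∀ x : Sph n, ∑ i, (x : Eu n) i * (x : Eu n) i = 1 := by
      intro x
      have := sph_norm x
      rw [EuclideanSpace.norm_eq, Real.sqrt_eq_one] at this
      refine Eq.trans (Finset.sum_congr rfl fun i _ => ?_) this
      simp [sq]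
    simp only [h1] at hs
    have hp : 0 < ∫ x : Sph n, (1:ℝ) ∂sphMeas n := by
      rw [integral_pos_iff_support_of_nonneg (fun x => zero_le_one) (contS_integrable continuous_const)]
      have : Function.support (fun _ : Sph n => (1:ℝ)) = Set.univ := by
        ext x; simp
      rw [this]
      exact (Measure.measure_univ_pos).2 (NeZero.ne _)
    set T := ∫ x : Sph n, (1:ℝ) ∂sphMeas n
    simp only [Finset.sum_const, Finset.card_univ, Fintype.card_fin, nsmul_eq_mul, smul_zero, mul_zero] at hs
    push_cast at hs
    have : T * (Q1 n + (n + 1) * Q2 n) = 0 := by linarith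
    rcases mul_eq_zero.1 this with h | h
    · exact absurd h hp.ne'
    · linarith
  · intro i _
    exact contS_integrable (by fun_prop)

theorem ibp {w : Eu n → ℝ} {w' : Eu n → Eu n →L[ℝ] ℝ}
    (hd : ∀ z, z ≠ 0 → HasFDerivAt w (w' z) z) (hc : ∀ z, z ≠ 0 → ContinuousAt w' z)
    (hom : ∀ z, z ≠ 0 → ∀ r : ℝ, 0 < r → w (r • z) = r * w z) (e : Eu n) :
    ∫ x : Sph n, w' x e ∂sphMeas n =
      (n + 1) * ∫ x : Sph n, w x * ⟪(x : Eu n), e⟫_ℝ ∂sphMeas n := by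
  have h := ibp_aux hd hc hom e
  rw [Q1_eq] at h
  have h2 := Q2_pos (n := n)
  have : Q2 n * (∫ x : Sph n, w' x e ∂sphMeas n -
      (n + 1) * ∫ x : Sph n, w x * ⟪(x : Eu n), e⟫_ℝ ∂sphMeas n) = 0 := by linarith
  rcases mul_eq_zero.1 this with h | h
  · exact absurd h h2.ne'
  · linarith
end


/-! ### The integral estimate -/

section P7
variable {n : ℕ} {K : Set (Eu n)}

/-- trace of the Hessian in the standard basis -/
def trA (K : Set (Eu n)) (x : Eu n) : ℝ :=
  ∑ i, ⟪hessA K x (EuclideanSpace.basisFun (Fin (n+1)) ℝ i), EuclideanSpace.basisFun (Fin (n+1)) ℝ i⟫_ℝ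

theorem hess_psd (hK : IsSmoothConvexBody K) (x : Sph n) (v : Eu n) :
    0 ≤ ⟪hessA K x v, v⟫_ℝ := by
  set a := ⟪(x : Eu n), v⟫_ℝ with ha
  set u := v - a • (x : Eu n) with hu
  have h1 : hessA K x u = hessA K x v := by
    rw [hu, map_sub, map_smul, hess_self hK (sph_ne x)]; simp
  have hxx : ⟪(x : Eu n), (x : Eu n)⟫_ℝ = 1 := by rw [real_inner_self_eq_norm_sq, sph_norm]; simp
  have hxu : ⟪(x : Eu n), u⟫_ℝ = 0 := by
    rw [hu, inner_sub_right, inner_smul_right, hxx]; simp [ha]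
  have h2 : ⟪hessA K x v, v⟫_ℝ = ⟪hessA K x u, u⟫_ℝ := by
    rw [h1, hu, inner_sub_right, inner_smul_right, hess_inner hK (sph_ne x)]; simp
  rw [h2]
  by_cases h0 : u = 0
  · simp [h0]
  have := hK.posdef x u h0
  have h3 : (tens (x : Eu n)) u = 0 := by simp [tens, hxu]
  rw [ContinuousLinearMap.add_apply, h3, add_zero] at this
  exact this.le

theorem trA_cont (hK : IsSmoothConvexBody K) : Continuous fun x : Sph n => trA K x := by
  have := hess_contS hK
  unfold trA
  fun_prop

theorem ibp_h (hK : IsSmoothConvexBody K) (e : Eu n) :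
    ∫ x : Sph n, ⟪e, Xg K x⟫_ℝ ∂sphMeas n =
      (n+1) * ∫ x : Sph n, sfn K x * ⟪(x : Eu n), e⟫_ℝ ∂sphMeas n := by
  have := ibp (n := n) (w := sfn K) (w' := fun z => innerSL ℝ (Xg K z))
    (fun z hz => (sfn_hasGrad hK hz).hasFDerivAt)
    (fun z hz => (innerSL ℝ).continuous.continuousAt.comp (grad_cont hK hz))
    (fun z hz r hr => sfn_smul hK hr.le z) e
  rw [← this]
  congr 1; ext x; simp [real_inner_comm]

theorem ibp_XX (hK : IsSmoothConvexBody K) (g : Eu n → ℝ) (g' : Eu n → Eu n)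
    (hd : ∀ z, z ≠ 0 → HasGradientAt g (g' z) z)
    (hc : ∀ z, z ≠ 0 → ContinuousAt g' z)
    (hom : ∀ z, z ≠ 0 → ∀ r : ℝ, 0 < r → g (r • z) = r * g z)
    (c e : Eu n) :
    ∫ x : Sph n, (g x * ⟪hessA K x e, e⟫_ℝ + ⟪g' x, e⟫_ℝ * ⟪e, Xg K x - c⟫_ℝ) ∂sphMeas n =
      (n+1) * ∫ x : Sph n, g x * (⟪(x : Eu n), e⟫_ℝ * ⟪e, Xg K x - c⟫_ℝ) ∂sphMeas n := by
  have := ibp (n := n) (w := fun z => g z * ⟪e, Xg K z - c⟫_ℝ)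
    (w' := fun z => g z • ((innerSL ℝ e).comp (hessA K z)) + ⟪e, Xg K z - c⟫_ℝ • innerSL ℝ (g' z))
    (fun z hz => by
      have h1 := (hd z hz).hasFDerivAt
      have h2 : HasFDerivAt (fun z => ⟪e, Xg K z - c⟫_ℝ) ((innerSL ℝ e).comp (hessA K z)) z :=
        (innerSL ℝ e).hasFDerivAt.comp z ((grad_hasFDeriv hK hz).sub_const c)
      exact h1.mul h2)
    (fun z hz => by
      have h1 := (hd z hz).hasFDerivAt.continuousAt
      have h2 := hess_cont hK hz
      have h3 := grad_cont hK hz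
      have h4 := hc z hz
      have h5 : ContinuousAt (fun z => (innerSL ℝ e).comp (hessA K z)) z :=
        continuousAt_const.clm_comp h2
      have h6 : ContinuousAt (fun z => innerSL ℝ (g' z)) z :=
        (innerSL ℝ).continuous.continuousAt.comp h4
      have h7 : ContinuousAt (fun z => ⟪e, Xg K z - c⟫_ℝ) z :=
        continuousAt_const.inner (h3.sub continuousAt_const)
      exact (h1.smul h5).add (h7.smul h6))
    (fun z hz r hr => by simp only [hom z hz r hr, grad_smul hK hr hz]; ring) e
  refine Eq.trans ?_ (this.trans ?_)
  · congr 1; ext x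
    simp [real_inner_comm]; ring
  · congr 2; ext x; ring

theorem ibp_tr (hK : IsSmoothConvexBody K) (g : Eu n → ℝ) (g' : Eu n → Eu n)
    (hd : ∀ z, z ≠ 0 → HasGradientAt g (g' z) z)
    (hc : ∀ z, z ≠ 0 → ContinuousAt g' z)
    (hom : ∀ z, z ≠ 0 → ∀ r : ℝ, 0 < r → g (r • z) = r * g z)
    (c : Eu n) :
    (∫ x : Sph n, g x * trA K x ∂sphMeas n) + ∫ x : Sph n, ⟪g' x, Xg K x - c⟫_ℝ ∂sphMeas n =
      (n+1) * ∫ x : Sph n, g x * (sfn K x - ⟪(x : Eu n), c⟫_ℝ) ∂sphMeas n := by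
  have hX := grad_contS hK
  have hA := hess_contS hK
  have hg : Continuous fun x : Sph n => g x := continuous_iff_continuousAt.2 fun x =>
    ((hd x (sph_ne x)).hasFDerivAt.continuousAt.comp continuous_subtype_val.continuousAt)
  have hg' : Continuous fun x : Sph n => g' x := continuous_iff_continuousAt.2 fun x =>
    ((hc x (sph_ne x)).comp continuous_subtype_val.continuousAt)
  have hT := trA_cont hK
  set b := EuclideanSpace.basisFun (Fin (n+1)) ℝ with hb
  have hs := Finset.sum_congr rfl fun i (_ : i ∈ Finset.univ) => ibp_XX hK g g' hd hc hom c (b i)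
  rw [← Finset.mul_sum, ← integral_finsetSum, ← integral_finsetSum] at hs
  · have i1 : Integrable (fun x : Sph n => g x * trA K x) (sphMeas n) :=
      contS_integrable (hg.mul hT)
    have i2 : Integrable (fun x : Sph n => ⟪g' x, Xg K x - c⟫_ℝ) (sphMeas n) :=
      contS_integrable (hg'.inner (hX.sub continuous_const))
    rw [← integral_add i1 i2]
    convert hs using 2
    · ext x
      rw [Finset.sum_add_distrib, ← Finset.mul_sum, b.sum_inner_mul_inner]; rfl
    · congr 1; ext x
      rw [← Finset.mul_sum, b.sum_inner_mul_inner, inner_sub_right, inner_grad hK (sph_ne x)]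
  · intro i _
    have : Continuous fun x : Sph n => (⟪(x : Eu n), b i⟫_ℝ * ⟪b i, Xg K x - c⟫_ℝ) := by fun_prop
    exact contS_integrable (hg.mul this)
  · intro i _
    have h1 : Continuous fun x : Sph n => ⟪hessA K x (b i), b i⟫_ℝ := by fun_prop
    have h2 : Continuous fun x : Sph n => ⟪b i, Xg K x - c⟫_ℝ := by fun_prop
    exact contS_integrable ((hg.mul h1).add ((hg'.inner continuous_const).mul h2))

theorem ibp_final (hK : IsSmoothConvexBody K) (c : Eu n) :
    (∫ x : Sph n, sfn K x * trA K x ∂sphMeas n) + ∫ x : Sph n, ‖Xg K x - c‖ ^ 2 ∂sphMeas n =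
      (n+1) * ∫ x : Sph n, (sfn K x - ⟪(x : Eu n), c⟫_ℝ) ^ 2 ∂sphMeas n := by
  have hX := grad_contS hK
  have hS := sfn_contS hK
  have hT := trA_cont hK
  have hgc : ∀ z : Eu n, HasGradientAt (fun z => ⟪z, c⟫_ℝ) c z := fun z => by
    rw [hasGradientAt_iff_hasFDerivAt]
    have := (innerSL ℝ c).hasFDerivAt (x := z)
    have h2 : (fun z : Eu n => ⟪z, c⟫_ℝ) = innerSL ℝ c := by ext z; simp [real_inner_comm]
    rw [h2]; exact this
  have h1 := ibp_tr hK (fun z => sfn K z - ⟪z, c⟫_ℝ) (fun z => Xg K z - c)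
    (fun z hz => by
      rw [hasGradientAt_iff_hasFDerivAt, map_sub]
      exact (sfn_hasGrad hK hz).hasFDerivAt.sub (hgc z).hasFDerivAt)
    (fun z hz => (grad_cont hK hz).sub continuousAt_const)
    (fun z hz r hr => by rw [sfn_smul hK hr.le, inner_smul_left]; simp; ring) c
  have h2 := ibp_tr hK (fun z => ⟪z, c⟫_ℝ) (fun z => c) (fun z _ => hgc z)
    (fun z hz => continuousAt_const)
    (fun z hz r hr => by rw [inner_smul_left]; simp) 0
  have h3 := ibp_h hK c
  have h4 : ∫ x : Sph n, ⟪(x : Eu n), c⟫_ℝ * trA K x ∂sphMeas n = 0 := by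
    simp only [sub_zero, inner_zero_right] at h2
    rw [h3] at h2
    have : ∀ x : Sph n, ⟪(x : Eu n), c⟫_ℝ * sfn K x = sfn K x * ⟪(x : Eu n), c⟫_ℝ :=
      fun x => mul_comm _ _
    simp only [this] at h2
    linarith
  have h5 : ∫ x : Sph n, (sfn K x - ⟪(x : Eu n), c⟫_ℝ) * trA K x ∂sphMeas n =
      ∫ x : Sph n, sfn K x * trA K x ∂sphMeas n := by
    simp only [sub_mul]
    rw [integral_sub (contS_integrable (by fun_prop)) (contS_integrable (by fun_prop)), h4, sub_zero]
  rw [h5] at h1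
  simp only [real_inner_self_eq_norm_sq, ← sq] at h1
  exact h1

theorem avg_min {f : Sph n → ℝ} (hf : Continuous f) (a c : ℝ)
    (ha : ∫ x, f x ∂sphMeas n = a * (sphMeas n).real Set.univ) :
    ∫ x, (f x - a) ^ 2 ∂sphMeas n ≤ ∫ x, (f x - c) ^ 2 ∂sphMeas n := by
  have h1 : ∫ x, ((f x - c) ^ 2 - (f x - a)^2) ∂sphMeas n = (a - c)^2 * (sphMeas n).real Set.univ := by
    have : ∀ x, (f x - c) ^ 2 - (f x - a)^2 = 2 * (a - c) * f x + (c^2 - a^2) := fun x => by ring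
    simp only [this]
    rw [integral_add (contS_integrable (by fun_prop)) (contS_integrable (by fun_prop)),
      integral_const_mul, ha, integral_const]
    simp; ring
  rw [integral_sub (contS_integrable (by fun_prop)) (contS_integrable (by fun_prop))] at h1
  have : 0 ≤ (a - c)^2 * (sphMeas n).real Set.univ := by positivity
  linarith

theorem int_est (hn : 1 ≤ n) (hK : IsSmoothConvexBody K) {ε R : ℝ} (hε0 : 0 < ε) (hε : ε < 1)
    (hd : ∀ x : Sph n, 1 - ε ≤ dens K (x : Eu n) ∧ dens K (x : Eu n) ≤ 1 + ε)
    (hR : ∀ y ∈ K, ‖y‖ ≤ R) :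
    ∃ c : Eu n, ‖c‖ ≤ R ∧
      ∫ x : Sph n, (‖Xg K x - c‖ ^ 2 - (sfn K x - ⟪(x : Eu n), c⟫_ℝ) ^ 2) ∂sphMeas n ≤
        8 * ε * R ^ 2 * (sphMeas n).real Set.univ := by
  have hX := grad_contS hK
  have hS := sfn_contS hK
  have hT := trA_cont hK
  have hA := hess_contS hK
  have hD := dens_contS hK
  set μ := (sphMeas n).real Set.univ with hμ
  have hμ0 : 0 < μ := by
    rw [hμ, measureReal_def, ENNReal.toReal_pos_iff]
    exact ⟨by simpa [pos_iff_ne_zero] using (NeZero.ne (sphMeas n)), measure_lt_top _ _⟩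
  have hpos : ∀ x : Sph n, 0 < dens K x := fun x => by linarith [(hd x).1]
  have hRX : ∀ x : Sph n, ‖Xg K x‖ ≤ R := fun x => hR _ (grad_mem hK (sph_ne x))
  set c : Eu n := μ⁻¹ • ∫ x : Sph n, Xg K x ∂sphMeas n with hc
  have hcR : ‖c‖ ≤ R := by
    rw [hc, norm_smul, norm_inv, Real.norm_of_nonneg hμ0.le, inv_mul_le_iff₀ hμ0, mul_comm]
    exact norm_integral_le_of_norm_le_const (Filter.Eventually.of_forall hRX)
  have hR0 : 0 ≤ R := (norm_nonneg c).trans hcR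
  refine ⟨c, hcR, ?_⟩
  set b := EuclideanSpace.basisFun (Fin (n+1)) ℝ with hb
  have key : ∀ i, (1 - ε) * n * ∫ x : Sph n, ⟪b i, Xg K x - c⟫_ℝ ^ 2 ∂sphMeas n ≤
      (1 + ε) * ∫ x : Sph n, sfn K x * ⟪hessA K x (b i), b i⟫_ℝ ∂sphMeas n := by
    intro i
    obtain ⟨c', h⟩ := spectral hK hpos (e := b i) (b.norm_eq_one i)
    have h1 : ∫ x : Sph n, dens K x * (sfn K x * ⟪hessA K x (b i), b i⟫_ℝ) ∂sphMeas n ≤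
        (1 + ε) * ∫ x : Sph n, sfn K x * ⟪hessA K x (b i), b i⟫_ℝ ∂sphMeas n := by
      rw [← integral_const_mul]
      refine integral_mono (contS_integrable (by fun_prop)) (contS_integrable (by fun_prop)) fun x => ?_
      exact mul_le_mul_of_nonneg_right (hd x).2
        (mul_nonneg (hK.pos x).le (hess_psd hK x _))
    have h2 : (1 - ε) * ∫ x : Sph n, (⟪b i, Xg K x⟫_ℝ - c') ^ 2 ∂sphMeas n ≤
        ∫ x : Sph n, dens K x * (⟪b i, Xg K x⟫_ℝ - c') ^ 2 ∂sphMeas n := by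
      rw [← integral_const_mul]
      refine integral_mono (contS_integrable (by fun_prop)) (contS_integrable (by fun_prop)) fun x => ?_
      exact mul_le_mul_of_nonneg_right (hd x).1 (sq_nonneg _)
    have h3 := avg_min (n := n) (f := fun x => ⟪b i, Xg K x⟫_ℝ) (by fun_prop) ⟪b i, c⟫_ℝ c' (by
      rw [integral_inner (contS_integrable hX), hc, inner_smul_right, ← hμ, mul_comm, ← mul_assoc,
        mul_inv_cancel₀ hμ0.ne', one_mul])
    simp only [inner_sub_right]
    have hn0 : (0:ℝ) ≤ n := by positivity
    have h4 := mul_le_mul_of_nonneg_left (mul_le_mul_of_nonneg_left h3 (by linarith : (0:ℝ) ≤ 1 - ε)) hn0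
    have h5 := mul_le_mul_of_nonneg_left h2 hn0
    linarith
  have hsum := Finset.sum_le_sum fun i (_ : i ∈ Finset.univ) => key i
  rw [← Finset.mul_sum, ← Finset.mul_sum, ← integral_finsetSum, ← integral_finsetSum] at hsum
  rotate_left
  · intro i _; exact contS_integrable (by fun_prop)
  · intro i _; exact contS_integrable (by fun_prop)
  have e1 : ∀ x : Sph n, ∑ i, ⟪b i, Xg K x - c⟫_ℝ ^ 2 = ‖Xg K x - c‖ ^ 2 := fun x =>
    b.sum_sq_inner_right _
  have e2 : ∀ x : Sph n, ∑ i, sfn K x * ⟪hessA K x (b i), b i⟫_ℝ = sfn K x * trA K x := fun x => by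
    rw [← Finset.mul_sum]; rfl
  simp only [e1, e2] at hsum
  have hf := ibp_final hK c
  rw [integral_sub (contS_integrable (by fun_prop)) (contS_integrable (by fun_prop))]
  have hb1 : ∀ x : Sph n, ‖Xg K x - c‖ ^ 2 ≤ 4 * R ^ 2 := fun x => by
    have := (norm_sub_le (Xg K x) c).trans (add_le_add (hRX x) hcR)
    nlinarith [norm_nonneg (Xg K x - c)]
  have hb2 : ∀ x : Sph n, (sfn K x - ⟪(x : Eu n), c⟫_ℝ) ^ 2 ≤ 4 * R ^ 2 := fun x => by
    refine le_trans ?_ (hb1 x)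
    rw [← inner_grad hK (sph_ne x), ← inner_sub_right]
    have := abs_real_inner_le_norm (x : Eu n) (Xg K x - c)
    rw [sph_norm, one_mul] at this
    rw [← sq_abs]
    exact pow_le_pow_left₀ (abs_nonneg _) this 2
  have hP : ∫ x : Sph n, ‖Xg K x - c‖ ^ 2 ∂sphMeas n ≤ 4 * R ^ 2 * μ := by
    have := integral_mono (μ := sphMeas n) (contS_integrable (by fun_prop))
      (integrable_const (4 * R ^ 2)) hb1
    rw [integral_const] at this
    simpa [mul_comm, hμ] using this
  have hQ : ∫ x : Sph n, (sfn K x - ⟪(x : Eu n), c⟫_ℝ) ^ 2 ∂sphMeas n ≤ 4 * R ^ 2 * μ := by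
    have := integral_mono (μ := sphMeas n) (contS_integrable (by fun_prop))
      (integrable_const (4 * R ^ 2)) hb2
    rw [integral_const] at this
    simpa [mul_comm, hμ] using this
  set P := ∫ x : Sph n, ‖Xg K x - c‖ ^ 2 ∂sphMeas n
  set Q := ∫ x : Sph n, (sfn K x - ⟪(x : Eu n), c⟫_ℝ) ^ 2 ∂sphMeas n
  set T := ∫ x : Sph n, sfn K x * trA K x ∂sphMeas n
  have hn1 : (1:ℝ) ≤ n := by exact_mod_cast hn
  have g1 : (n + 1 : ℝ) * (P - Q) ≤ ε * ((n - 1) * P + (n + 1) * Q) := by nlinarith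
  have g2 : ((n:ℝ) - 1) * P + (n + 1) * Q ≤ 2 * n * (4 * R ^ 2 * μ) := by
    nlinarith [mul_le_mul_of_nonneg_left hP (by linarith : (0:ℝ) ≤ n - 1),
      mul_le_mul_of_nonneg_left hQ (by linarith : (0:ℝ) ≤ n + 1)]
  have g3 := mul_le_mul_of_nonneg_left g2 hε0.le
  have g4 : 0 ≤ ε * (R ^ 2 * μ) := by positivity
  have g5 : (n + 1 : ℝ) * (P - Q) ≤ (n+1) * (8 * ε * R ^ 2 * μ) := by nlinarith
  exact le_of_mul_le_mul_left g5 (by linarith)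

end P7


/-! ### Geometric conclusion -/

section P8
variable {n : ℕ} {K : Set (Eu n)}

theorem exists_perp (hn : 1 ≤ n) (z : Sph n) : ∃ u : Sph n, ⟪(z : Eu n), (u : Eu n)⟫_ℝ = 0 := by
  haveI : Fact (Module.finrank ℝ (Eu n) = n + 1) := ⟨by simp⟩
  have h1 : Module.finrank ℝ (Submodule.span ℝ {(z : Eu n)})ᗮ = n :=
    Submodule.finrank_orthogonal_span_singleton (sph_ne z)
  have : Nontrivial (Submodule.span ℝ {(z : Eu n)})ᗮ :=
    Module.nontrivial_of_finrank_pos (R := ℝ) (by omega)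
  obtain ⟨u, hu⟩ := exists_ne (0 : (Submodule.span ℝ {(z : Eu n)})ᗮ)
  have hu0 : (u : Eu n) ≠ 0 := by simpa using hu
  refine ⟨⟨_, nrm_mem hu0⟩, ?_⟩
  have := Submodule.mem_orthogonal_singleton_iff_inner_right.1 u.2
  simp [inner_smul_right, this]

theorem step_half {F : Sph n → ℝ} {η a : ℝ} (hη : 0 ≤ η) (ha : 0 ≤ a)
    (hF : ∀ y z : Sph n, F z * ⟪(z : Eu n), (y : Eu n)⟫_ℝ - η ≤ F y)
    {y z : Sph n} (h0 : 0 ≤ ⟪(z : Eu n), (y : Eu n)⟫_ℝ) (hz : a ≤ F z) :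
    a / 2 - 2 * η ≤ F y := by
  set s := ⟪(z : Eu n), (y : Eu n)⟫_ℝ with hs
  have hzz : ⟪(z : Eu n), (z : Eu n)⟫_ℝ = 1 := by rw [real_inner_self_eq_norm_sq, sph_norm]; simp
  have hyy : ⟪(y : Eu n), (y : Eu n)⟫_ℝ = 1 := by rw [real_inner_self_eq_norm_sq, sph_norm]; simp
  set p : Eu n := (z : Eu n) + y with hp
  have hpn : ‖p‖ ^ 2 = 2 + 2 * s := by
    rw [hp, norm_add_sq_real, sph_norm, sph_norm, ← hs]; ring
  have hp0 : p ≠ 0 := by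
    intro h; rw [h] at hpn; simp at hpn; linarith
  have hpp : 0 < ‖p‖ := norm_pos_iff.2 hp0
  set w : Sph n := ⟨_, nrm_mem hp0⟩ with hw
  have k1 : ⟪(z : Eu n), (w : Eu n)⟫_ℝ = ‖p‖ / 2 := by
    have : ⟪(z : Eu n), (w : Eu n)⟫_ℝ = ‖p‖⁻¹ * (1 + s) := by
      simp only [hw, inner_smul_right, hp, inner_add_right, hzz, ← hs]
    rw [this, inv_mul_eq_div, div_eq_div_iff hpp.ne' (by norm_num)]; nlinarith
  have k2 : ⟪(w : Eu n), (y : Eu n)⟫_ℝ = ‖p‖ / 2 := by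
    have : ⟪(w : Eu n), (y : Eu n)⟫_ℝ = ‖p‖⁻¹ * (1 + s) := by
      simp only [hw, inner_smul_left, hp, inner_add_left, hyy, ← hs]
      rw [add_comm s 1]; rfl
    rw [this, inv_mul_eq_div, div_eq_div_iff hpp.ne' (by norm_num)]; nlinarith
  have h1 := hF w z
  have h2 := hF y w
  rw [k1] at h1
  rw [k2] at h2
  set k := ‖p‖ / 2 with hk
  have hs1 : s ≤ 1 := by
    have := real_inner_le_norm (z : Eu n) (y : Eu n)
    rwa [sph_norm, sph_norm, one_mul] at this
  have hk0 : 0 < k := by positivity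
  have hk2 : k ^ 2 = (1 + s) / 2 := by rw [hk, div_pow, hpn]; ring
  have hk1 : k ≤ 1 := by nlinarith
  have h3 : a * k - η ≤ F w := le_trans (by nlinarith) h1
  have h4 := mul_le_mul_of_nonneg_right h3 hk0.le
  nlinarith

theorem step_quarter (hn : 1 ≤ n) {F : Sph n → ℝ} {R : ℝ} (hR : 0 ≤ R)
    (hF : ∀ y z : Sph n, F z * ⟪(z : Eu n), (y : Eu n)⟫_ℝ - R / 32 ≤ F y)
    {z : Sph n} (hz : R / 2 ≤ F z) (y : Sph n) : R / 32 ≤ F y := by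
  obtain ⟨u, hu⟩ := exists_perp hn z
  have : ∃ u : Sph n, ⟪(z : Eu n), (u : Eu n)⟫_ℝ = 0 ∧ 0 ≤ ⟪(u : Eu n), (y : Eu n)⟫_ℝ := by
    rcases le_total 0 ⟪(u : Eu n), (y : Eu n)⟫_ℝ with h | h
    · exact ⟨u, hu, h⟩
    · exact ⟨-u, by simpa using hu, by simpa using h⟩
  obtain ⟨u, hu, huy⟩ := this
  have h1 := step_half (by positivity) (by positivity) hF hu.ge hz
  have h2 := step_half (by positivity) (by linarith) hF huy h1
  linarith

theorem exists_good {D : Sph n → ℝ} (hD : Continuous D) (hD0 : ∀ x, 0 ≤ D x) {t ρ : ℝ}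
    (ht : 0 ≤ t) (z : Sph n)
    (h : ∫ x, D x ∂sphMeas n < t * (sphMeas n).real (ball z ρ)) :
    ∃ x : Sph n, dist x z < ρ ∧ D x ≤ t := by
  by_contra hcon
  push Not at hcon
  have h1 : ∫ x in ball z ρ, t ∂sphMeas n ≤ ∫ x in ball z ρ, D x ∂sphMeas n :=
    setIntegral_mono_on (integrable_const _).integrableOn (contS_integrable hD).integrableOn
      measurableSet_ball fun x hx => (hcon x hx).le
  have h2 : ∫ x in ball z ρ, D x ∂sphMeas n ≤ ∫ x, D x ∂sphMeas n :=
    setIntegral_le_integral (contS_integrable hD) (Filter.Eventually.of_forall hD0)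
  rw [setIntegral_const, smul_eq_mul, mul_comm] at h1
  linarith

theorem ball_sub_K (hK : IsSmoothConvexBody K) {c : Eu n} {r : ℝ}
    (h : ∀ x : Sph n, r ≤ sfn K x - ⟪(x : Eu n), c⟫_ℝ) : closedBall c r ⊆ K := by
  intro p hp
  by_contra hpK
  obtain ⟨f, u, h1, h2⟩ := geometric_hahn_banach_closed_point hK.convex hK.compact.isClosed hpK
  set v := (InnerProductSpace.toDual ℝ (Eu n)).symm f with hv
  have hf : ∀ y, f y = ⟪v, y⟫_ℝ := fun y => by rw [hv, InnerProductSpace.toDual_symm_apply]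
  obtain ⟨q, hq⟩ := K_nonempty hK
  have hv0 : v ≠ 0 := by
    intro h0
    have := (h1 q hq).trans h2
    rw [hf, hf, h0] at this
    simp at this
  obtain ⟨y, hy, hys⟩ := exists_max hK v
  have h3 := (h1 y hy).trans h2
  rw [hf, hf, hys] at h3
  have h4 := h ⟨_, nrm_mem hv0⟩
  have h5 : sfn K v = ‖v‖ * sfn K (‖v‖⁻¹ • v) := by
    conv_lhs => rw [nrm_eq hv0]
    rw [sfn_smul hK (norm_nonneg _)]
  have hvp : 0 < ‖v‖ := norm_pos_iff.2 hv0
  have h6 : ‖v‖ * ⟪‖v‖⁻¹ • v, c⟫_ℝ = ⟪v, c⟫_ℝ := by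
    rw [inner_smul_left]; simp; field_simp
  have h7 : ⟪v, p⟫_ℝ ≤ ⟪v, c⟫_ℝ + ‖v‖ * r := by
    have := real_inner_le_norm v (p - c)
    rw [inner_sub_right] at this
    have hpc : ‖p - c‖ ≤ r := by simpa [dist_eq_norm] using hp
    nlinarith
  have h8 := mul_le_mul_of_nonneg_left h4 hvp.le
  rw [mul_sub, h6, ← h5] at h8
  linarith

theorem tilt (hK : IsSmoothConvexBody K) {R : ℝ} (hR0 : 0 < R) (hR : ∀ y ∈ K, ‖y‖ ≤ R)
    {c : Eu n} (hc : ‖c‖ ≤ R)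
    (hgood : ∀ z : Sph n, ∃ x : Sph n, dist x z < 1 / 256 ∧
      ‖Xg K x - c‖ ^ 2 - (sfn K x - ⟪(x : Eu n), c⟫_ℝ) ^ 2 ≤ (R / 64) ^ 2) (y z : Sph n) :
    (sfn K z - ⟪(z : Eu n), c⟫_ℝ) * ⟪(z : Eu n), (y : Eu n)⟫_ℝ - R / 32 ≤
      sfn K y - ⟪(y : Eu n), c⟫_ℝ := by
  have hXR : ∀ x : Sph n, ‖Xg K x - c‖ ≤ 2 * R := fun x => by
    have := norm_sub_le (Xg K x) c
    linarith [hR _ (grad_mem hK (sph_ne x))]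
  have hsub : ∀ x y : Sph n, ⟪(y : Eu n), Xg K x - c⟫_ℝ ≤ sfn K y - ⟪(y : Eu n), c⟫_ℝ := by
    intro x y
    rw [inner_sub_right]
    linarith [inner_grad_le hK (sph_ne x) (y : Eu n)]
  have heq : ∀ x : Sph n, ⟪(x : Eu n), Xg K x - c⟫_ℝ = sfn K x - ⟪(x : Eu n), c⟫_ℝ := by
    intro x
    rw [inner_sub_right, inner_grad hK (sph_ne x)]
  have hlip : ∀ x y : Sph n, (sfn K x - ⟪(x : Eu n), c⟫_ℝ) - (sfn K y - ⟪(y : Eu n), c⟫_ℝ) ≤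
      2 * R * dist x y := by
    intro x y
    have h1 := hsub x y
    have h2 := heq x
    have h3 := real_inner_le_norm ((x : Eu n) - y) (Xg K x - c)
    rw [inner_sub_left] at h3
    have h4 : dist x y = ‖(x : Eu n) - y‖ := by rw [Subtype.dist_eq, dist_eq_norm]
    rw [h4]
    nlinarith [hXR x, norm_nonneg ((x : Eu n) - y)]
  obtain ⟨x, hxz, hx⟩ := hgood z
  have hl1 := hlip x z
  have hl2 := hlip z x
  rw [dist_comm] at hl2
  have hs := hsub x y
  have he := heq x
  have hxyz : |⟪(x : Eu n), (y : Eu n)⟫_ℝ - ⟪(z : Eu n), (y : Eu n)⟫_ℝ| ≤ dist x z := by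
    rw [← inner_sub_left, Subtype.dist_eq, dist_eq_norm]
    have := abs_real_inner_le_norm ((x : Eu n) - z) y
    rwa [sph_norm, mul_one] at this
  have hzy : |⟪(z : Eu n), (y : Eu n)⟫_ℝ| ≤ 1 := by
    have := abs_real_inner_le_norm (z : Eu n) y
    rwa [sph_norm, sph_norm, one_mul] at this
  have hFx : |sfn K x - ⟪(x : Eu n), c⟫_ℝ| ≤ 2 * R := by
    rw [← he]
    have := abs_real_inner_le_norm (x : Eu n) (Xg K x - c)
    rw [sph_norm, one_mul] at this
    exact this.trans (hXR x)
  set Fx := sfn K x - ⟪(x : Eu n), c⟫_ℝ with hFxd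
  set Fz := sfn K z - ⟪(z : Eu n), c⟫_ℝ
  set Fy := sfn K y - ⟪(y : Eu n), c⟫_ℝ
  have htan : ‖Xg K x - c - Fx • (x : Eu n)‖ ≤ R / 64 := by
    have : ‖Xg K x - c - Fx • (x : Eu n)‖ ^ 2 = ‖Xg K x - c‖ ^ 2 - Fx ^ 2 := by
      rw [norm_sub_sq_real, inner_smul_right, real_inner_comm, he, norm_smul, sph_norm, mul_one,
        Real.norm_eq_abs, sq_abs]; ring
    exact le_of_sq_le_sq (by rw [this]; exact hx) (by positivity)
  have hty : Fx * ⟪(x : Eu n), (y : Eu n)⟫_ℝ - R / 64 ≤ Fy := by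
    have := abs_real_inner_le_norm (y : Eu n) (Xg K x - c - Fx • (x : Eu n))
    rw [sph_norm, one_mul, inner_sub_right, inner_smul_right, real_inner_comm] at this
    have h2 := (abs_le.1 this).1
    have h3 : ⟪(y : Eu n), (x : Eu n)⟫_ℝ = ⟪(x : Eu n), (y : Eu n)⟫_ℝ := real_inner_comm _ _
    have h4 : ⟪Xg K x - c, (y : Eu n)⟫_ℝ = ⟪(y : Eu n), Xg K x - c⟫_ℝ := real_inner_comm _ _
    simp only [h3, h4] at h2
    linarith
  have hd : |Fx - Fz| ≤ 2 * R * dist x z := abs_le.2 ⟨by linarith, hl1⟩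
  have e1 : Fz * ⟪(z : Eu n), (y : Eu n)⟫_ℝ - Fx * ⟪(x : Eu n), (y : Eu n)⟫_ℝ =
      -((Fx - Fz) * ⟪(z : Eu n), (y : Eu n)⟫_ℝ) -
        Fx * (⟪(x : Eu n), (y : Eu n)⟫_ℝ - ⟪(z : Eu n), (y : Eu n)⟫_ℝ) := by ring
  have b1 : |(Fx - Fz) * ⟪(z : Eu n), (y : Eu n)⟫_ℝ| ≤ 2 * R * dist x z * 1 := by
    rw [abs_mul]
    exact mul_le_mul hd hzy (abs_nonneg _) (by positivity)
  have b2 : |Fx * (⟪(x : Eu n), (y : Eu n)⟫_ℝ - ⟪(z : Eu n), (y : Eu n)⟫_ℝ)| ≤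
      2 * R * dist x z := by
    rw [abs_mul]
    exact mul_le_mul hFx hxyz (abs_nonneg _) (by positivity)
  have b3 : R * dist x z ≤ R * (1 / 256) := by gcongr
  have := (abs_le.1 b1).1
  have := (abs_le.1 b2).1
  linarith

theorem vol_R (hK : IsSmoothConvexBody K) {c : Eu n} {r : ℝ} (hr : 0 ≤ r)
    (hsub : closedBall c r ⊆ K) (hd : ∀ x : Sph n, 0 < dens K (x : Eu n) ∧ dens K (x : Eu n) ≤ 2) :
    r ≤ 4 := by
  have h1 := vol_K_le hK fun x => (hd x).1
  have h2 := (measure_mono hsub).trans h1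
  rw [Measure.addHaar_closedBall _ _ hr] at h2
  set β := (volume : Measure (Eu n)).real (ball 0 1) with hβ
  have hβ0 : 0 < β := by
    rw [hβ, measureReal_def, ENNReal.toReal_pos_iff]
    exact ⟨measure_ball_pos _ _ one_pos, measure_ball_lt_top⟩
  have hm : (sphMeas n).real Set.univ = (n + 1) * β := by
    rw [sphMeas, Measure.toSphere_real_apply_univ]; simp [hβ]
  have h3 : ∫ x : Sph n, dens K x ∂sphMeas n ≤ 2 * ((n+1) * β) := by
    have := integral_mono (μ := sphMeas n) (contS_integrable (dens_contS hK))
      (integrable_const (2:ℝ)) fun x => (hd x).2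
    rw [integral_const, hm] at this
    simpa [mul_comm] using this
  have h30 : 0 ≤ ∫ x : Sph n, dens K x ∂sphMeas n := integral_nonneg fun x => (hd x).1.le
  have h4 := ENNReal.toReal_mono ENNReal.ofReal_ne_top h2
  rw [ENNReal.toReal_mul, ENNReal.toReal_ofReal (by positivity),
    ENNReal.toReal_ofReal (by positivity), ← measureReal_def, ← hβ] at h4
  have hfr : Module.finrank ℝ (Eu n) = n + 1 := by simp
  rw [hfr] at h4
  have h5 : 2 ^ (n+1) * (∫ x : Sph n, dens K x ∂sphMeas n) / (n+1) ≤ 2 ^ (n+1) * 2 * β := by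
    rw [div_le_iff₀ (by positivity)]
    nlinarith [mul_le_mul_of_nonneg_left h3 (by positivity : (0:ℝ) ≤ 2 ^ (n+1))]
  have h6 : r ^ (n+1) ≤ 2 ^ (n+1) * 2 := le_of_mul_le_mul_right (h4.trans h5) hβ0
  have h7 : (2:ℝ) ^ (n+1) * 2 ≤ 4 ^ (n+1) := by
    have : (4:ℝ) ^ (n+1) = 2 ^ (n+1) * 2 ^ (n+1) := by rw [← mul_pow]; norm_num
    rw [this]
    have : (2:ℝ) ≤ 2 ^ (n+1) := by
      calc (2:ℝ) = 2 ^ 1 := by norm_num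
        _ ≤ _ := pow_le_pow_right₀ (by norm_num) (by omega)
    gcongr
  exact le_of_pow_le_pow_left₀ (by omega) (by norm_num) (h6.trans h7)

theorem main_bound (n : ℕ) (hn : 1 ≤ n) :
    ∃ ε₀ C : ℝ, 0 < ε₀ ∧ 0 < C ∧
      ∀ K : Set (Eu n), IsSmoothConvexBody K → (0 : Eu n) ∈ interior K →
        ∀ ε : ℝ, ε ∈ Set.Ioo 0 ε₀ →
          (∀ x : Sph n, 1 - ε ≤ dens K (x : Eu n) ∧ dens K (x : Eu n) ≤ 1 + ε) →
          ∀ x : Sph n, sfn K (x : Eu n) ≤ C := by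
  set B : ℝ := ((Measure.toSphereBallBound (n+1) (1/256) : NNReal) : ℝ) with hB
  have hB0 : 0 < B := by
    rw [hB]; exact_mod_cast Measure.toSphereBallBound_pos _ _
  refine ⟨min 1 (B / (8 * (n+1) * 64 ^ 2)), 128, by positivity, by norm_num, ?_⟩
  intro K hK _ ε ⟨hε0, hε1⟩ hd
  have hεa : ε < 1 := hε1.trans_le (min_le_left _ _)
  have hεb : ε < B / (8 * (n+1) * 64 ^ 2) := hε1.trans_le (min_le_right _ _)
  obtain ⟨y0, hy0, hmax⟩ := hK.compact.exists_isMaxOn (K_nonempty hK) continuous_norm.continuousOn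
  set R := ‖y0‖ with hRdef
  have hR : ∀ y ∈ K, ‖y‖ ≤ R := fun y hy => hmax hy
  have hsR : ∀ x : Sph n, sfn K x ≤ R := fun x => by
    obtain ⟨y, hy, h⟩ := exists_max hK (x : Eu n)
    rw [← h]
    have := real_inner_le_norm (x : Eu n) y
    rw [sph_norm, one_mul] at this
    exact this.trans (hR y hy)
  have hR0 : 0 < R := (hK.pos (Classical.arbitrary _)).trans_le (hsR _)
  suffices R ≤ 128 from fun x => (hsR x).trans this
  obtain ⟨c, hcR, hInt⟩ := int_est hn hK hε0 hεa hd hR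
  have hX := grad_contS hK
  have hS := sfn_contS hK
  have hm : (sphMeas n).real Set.univ = (n + 1) * (volume : Measure (Eu n)).real (ball 0 1) := by
    rw [sphMeas, Measure.toSphere_real_apply_univ]; simp
  have hβ0 : 0 < (volume : Measure (Eu n)).real (ball 0 1) := by
    rw [measureReal_def, ENNReal.toReal_pos_iff]
    exact ⟨measure_ball_pos _ _ one_pos, measure_ball_lt_top⟩
  have hgood : ∀ z : Sph n, ∃ x : Sph n, dist x z < 1 / 256 ∧
      ‖Xg K x - c‖ ^ 2 - (sfn K x - ⟪(x : Eu n), c⟫_ℝ) ^ 2 ≤ (R / 64) ^ 2 := by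
    intro z
    refine exists_good (D := fun x : Sph n =>
      ‖Xg K x - c‖ ^ 2 - (sfn K x - ⟪(x : Eu n), c⟫_ℝ) ^ 2) (by fun_prop) (fun x => ?_)
      (by positivity) z (lt_of_le_of_lt hInt ?_)
    · have := abs_real_inner_le_norm (x : Eu n) (Xg K x - c)
      rw [sph_norm, one_mul, inner_sub_right, inner_grad hK (sph_ne x)] at this
      have h2 := pow_le_pow_left₀ (abs_nonneg _) this 2
      rw [sq_abs] at h2
      simpa using h2
    · have h1 := Measure.toSphereBallBound_mul_measureReal_unitBall_le_toSphere_ball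
        (volume : Measure (Eu n)) (ε := 1/256) (by norm_num) z
      have hfr : Module.finrank ℝ (Eu n) = n + 1 := by simp
      rw [hfr, ← hB] at h1
      rw [hm]
      refine lt_of_lt_of_le ?_ (mul_le_mul_of_nonneg_left h1 (by positivity))
      rw [lt_div_iff₀ (by positivity)] at hεb
      have : 0 < R ^ 2 * (volume : Measure (Eu n)).real (ball 0 1) / 64 ^ 2 := by positivity
      have := mul_lt_mul_of_pos_right hεb this
      calc _ = ε * (8 * (n+1) * 64 ^ 2) *
            (R ^ 2 * (volume : Measure (Eu n)).real (ball 0 1) / 64 ^ 2) := by ring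
        _ < _ := this
        _ = _ := by ring
  have htilt := tilt hK hR0 hR hcR hgood
  have hy00 : y0 ≠ 0 := norm_pos_iff.1 hR0
  have hz : ∃ z : Sph n, R / 2 ≤ sfn K z - ⟪(z : Eu n), c⟫_ℝ := by
    set x : Sph n := ⟨_, nrm_mem hy00⟩ with hx
    have h1 : R ≤ sfn K x := by
      have := inner_le_sfn hK hy0 (x : Eu n)
      have h2 : ⟪(x : Eu n), y0⟫_ℝ = R := by
        simp only [hx, inner_smul_left, real_inner_self_eq_norm_sq, ← hRdef]
        simp; field_simp
      linarith
    have h2 := hK.pos (-x)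
    by_contra hcon
    push Not at hcon
    have h3 := hcon x
    have h4 := hcon (-x)
    have h5 : ⟪((-x : Sph n) : Eu n), c⟫_ℝ = - ⟪(x : Eu n), c⟫_ℝ := by simp
    rw [h5] at h4
    linarith
  obtain ⟨z, hz⟩ := hz
  have hall := step_quarter hn (F := fun x : Sph n => sfn K x - ⟪(x : Eu n), c⟫_ℝ) hR0.le htilt hz
  have := vol_R hK (by positivity) (ball_sub_K hK hall)
    fun x => ⟨by linarith [(hd x).1], by linarith [(hd x).2]⟩
  linarith

end P8

end Aux

/-- There exist `ε₀ > 0` and `C > 0`, depending only on `n`, such that if `K` is a smooth,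
strictly convex body containing the origin in its interior with
`1 − ε ≤ h·det(A+x⊗x) ≤ 1 + ε` on `S^n` for some `ε ∈ (0, ε₀)`, then `h ≤ C` on `S^n`. -/
theorem support_bounded_of_near_constant_density (n : ℕ) (hn : 1 ≤ n) :
    ∃ ε₀ C : ℝ, 0 < ε₀ ∧ 0 < C ∧
      ∀ K : Set (Eu n), IsSmoothConvexBody K → (0 : Eu n) ∈ interior K →
        ∀ ε : ℝ, ε ∈ Set.Ioo 0 ε₀ →
          (∀ x : Sph n, 1 - ε ≤ dens K (x : Eu n) ∧ dens K (x : Eu n) ≤ 1 + ε) →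
          ∀ x : Sph n, sfn K (x : Eu n) ≤ C := by
  exact main_bound n hn
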